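/- arXiv:1310.2777 — 2 statements merged into one kernel-verified Lean document; each statement's English description precedes it below -/
import Mathlib

section
/- Let F : D^b(A) → D^b(B) be a derived equivalence given by tensoring with a two-sided tilting complex T•. Then there exists a constant N₁ ∈ ℕ (namely N₁ = 2^{d(B, F(A))}) such that hl(F(X•)) ≤ N₁ · hl(X•) for all bounded complexes X• ∈ D^b(A). -/
/-!
STATEMENT 3: If `F : D^b(A) → D^b(B)` is a derived equivalence (given by tensoring
with a two-sided tilting complex, i.e. a triangulated equivalence), then there is a
constant `N₁ ∈ ℕ` such that `hl(F(X)) ≤ N₁ · hl(X)` for all bounded complexes `X`.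
-/

open CategoryTheory Limits

universe u
variable (k : Type u) [Field k] [IsAlgClosed k]

section Defs

variable (R : Type u) [Ring R] [Algebra k R] [FiniteDimensional k R]
  [HasDerivedCategory.{u} (ModuleCat.{u} R)]

/-- The `i`-th cohomology of an object of the derived category. -/
noncomputable def Hobj (i : ℤ) (X : DerivedCategory (ModuleCat.{u} R)) : ModuleCat R :=
  (DerivedCategory.homologyFunctor (ModuleCat R) i).obj X

/-- `dim_k H^i(X)`. -/
noncomputable def hdim (i : ℤ) (X : DerivedCategory (ModuleCat.{u} R)) : ℕ :=
  Module.finrank k ((ModuleCat.restrictScalars (algebraMap k R)).obj (Hobj R i X))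

/-- The cohomological length `hl(X) = max_i dim_k H^i(X)`. -/
noncomputable def hl (X : DerivedCategory (ModuleCat.{u} R)) : ℕ :=
  sSup (Set.range fun i : ℤ => hdim k R i X)

/-- The cohomological width `hw(X) = max { j - i + 1 | H^i(X) ≠ 0 ≠ H^j(X) }`. -/
noncomputable def hw (X : DerivedCategory (ModuleCat.{u} R)) : ℕ :=
  sSup {n : ℕ | ∃ i j : ℤ, ¬ IsZero (Hobj R i X) ∧ ¬ IsZero (Hobj R j X) ∧ (n : ℤ) = j - i + 1}

/-- The cohomological range `hr(X) = hw(X) · hl(X)`. -/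
noncomputable def hr (X : DerivedCategory (ModuleCat.{u} R)) : ℕ := hw R X * hl k R X

/-- An object of an additive category is indecomposable iff it is nonzero and its only
idempotent endomorphisms are `0` and the identity. -/
def Indec {D : Type*} [Category D] [Limits.HasZeroMorphisms D] (X : D) : Prop :=
  ¬ IsZero X ∧ ∀ e : X ⟶ X, e ≫ e = e → e = 0 ∨ e = 𝟙 X

/-- `X` has bounded cohomology, i.e. `X` lies in `D^b`. -/
def Bdd (X : DerivedCategory (ModuleCat.{u} R)) : Prop :=
  ∃ a b : ℤ, ∀ i : ℤ, (i < a ∨ b < i) → IsZero (Hobj R i X)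

/-- All cohomologies of `X` are finite dimensional over `k`, i.e. `X` lies in the
bounded derived category of finite-dimensional modules. -/
def FinCoh (X : DerivedCategory (ModuleCat.{u} R)) : Prop :=
  ∀ i : ℤ, FiniteDimensional k
    ((ModuleCat.restrictScalars (algebraMap k R)).obj (Hobj R i X))

/-- Objects of `D^b(mod R)` (bounded, finite-dimensional cohomology). -/
def InDb (X : DerivedCategory (ModuleCat.{u} R)) : Prop := Bdd R X ∧ FinCoh k R X

/-- The global cohomological length `gl.hl R`, as a value in `ℕ∞`. -/
noncomputable def glhl : ℕ∞ :=
  ⨆ X : {X : DerivedCategory (ModuleCat.{u} R) // Indec X ∧ InDb k R X}, (hl k R X.1 : ℕ∞)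

/-- The global cohomological width `gl.hw R`, as a value in `ℕ∞`. -/
noncomputable def glhw : ℕ∞ :=
  ⨆ X : {X : DerivedCategory (ModuleCat.{u} R) // Indec X ∧ InDb k R X}, (hw R X.1 : ℕ∞)

/-- The global cohomological range `gl.hr R`, as a value in `ℕ∞`. -/
noncomputable def glhr : ℕ∞ :=
  ⨆ X : {X : DerivedCategory (ModuleCat.{u} R) // Indec X ∧ InDb k R X}, (hr k R X.1 : ℕ∞)

/-- `R` is strongly derived unbounded: there is an infinite strictly increasing sequence
`(rᵢ)` such that for each `i` there are infinitely many indecomposable objects of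
`D^b(mod R)` of cohomological range `rᵢ`, pairwise distinct up to shift and isomorphism. -/
def StronglyDerivedUnbounded : Prop :=
  ∃ r : ℕ → ℕ, StrictMono r ∧ ∀ i : ℕ, ∃ X : ℕ → DerivedCategory (ModuleCat.{u} R),
    (∀ j : ℕ, Indec (X j) ∧ InDb k R (X j) ∧ hr k R (X j) = r i) ∧
    (∀ j j' : ℕ, j ≠ j' → ∀ n : ℤ, IsEmpty (X j ≅ (X j')⟦n⟧))

end Defs

set_option linter.unusedSectionVars false

namespace HLB

section Abs
universe w
variable {D : Type w} [Category.{u} D] [Preadditive D] [HasCoproducts.{u} D]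

/-- Maps into a coproduct which are finite sums of maps through the summands. -/
noncomputable def finSub (T : D) {I : Type u} (Y : I → D) : AddSubgroup (T ⟶ ∐ Y) :=
  AddSubgroup.closure {h | ∃ (i : I) (g : T ⟶ Y i), h = g ≫ Sigma.ι Y i}

/-- Compact objects. -/
def Cpt (T : D) : Prop := ∀ (I : Type u) (Y : I → D) (f : T ⟶ ∐ Y), f ∈ finSub T Y

lemma finSub_precomp {T T' : D} {I : Type u} {Y : I → D} (a : T' ⟶ T) {f : T ⟶ ∐ Y}
    (hf : f ∈ finSub T Y) : a ≫ f ∈ finSub T' Y := by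
  induction hf using AddSubgroup.closure_induction with
  | mem x hx =>
    obtain ⟨i, g, rfl⟩ := hx
    exact AddSubgroup.subset_closure ⟨i, a ≫ g, by simp⟩
  | zero => simp [zero_mem]
  | add x y _ _ hx hy => simpa using add_mem hx hy
  | neg x _ hx => simpa using hx

open Classical in
noncomputable def prj {I : Type u} (Y : I → D) (i : I) : ∐ Y ⟶ Y i :=
  Sigma.desc (fun j => if h : j = i then eqToHom (by rw [h]) else 0)

@[simp]
lemma ι_prj_self {I : Type u} (Y : I → D) (i : I) : Sigma.ι Y i ≫ prj Y i = 𝟙 _ := by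
  simp [prj]

lemma ι_prj_ne {I : Type u} (Y : I → D) {i j : I} (h : i ≠ j) : Sigma.ι Y i ≫ prj Y j = 0 := by
  simp [prj, h]

noncomputable def eJ {I : Type u} (Y : I → D) (J : Finset I) : ∐ Y ⟶ ∐ Y :=
  ∑ i ∈ J, prj Y i ≫ Sigma.ι Y i

lemma ι_eJ {I : Type u} (Y : I → D) {J : Finset I} {i : I} (h : i ∈ J) :
    Sigma.ι Y i ≫ eJ Y J = Sigma.ι Y i := by
  rw [eJ, Preadditive.comp_sum, Finset.sum_eq_single i]
  · rw [← Category.assoc, ι_prj_self, Category.id_comp]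
  · intro j _ hj
    rw [← Category.assoc, ι_prj_ne _ hj.symm, zero_comp]
  · exact fun h' => (h' h).elim

lemma comp_eJ_mem {T : D} {I : Type u} (Y : I → D) (J : Finset I) (f : T ⟶ ∐ Y) :
    f ≫ eJ Y J ∈ finSub T Y := by
  rw [eJ, Preadditive.comp_sum]
  exact sum_mem fun i _ => AddSubgroup.subset_closure ⟨i, f ≫ prj Y i, by simp⟩

lemma exists_eJ {T : D} {I : Type u} {Y : I → D} {f : T ⟶ ∐ Y} (hf : f ∈ finSub T Y) :
    ∃ J : Finset I, ∀ J', J ⊆ J' → f ≫ eJ Y J' = f := by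
  classical
  induction hf using AddSubgroup.closure_induction with
  | mem x hx =>
    obtain ⟨i, g, rfl⟩ := hx
    exact ⟨{i}, fun J' h => by rw [Category.assoc, ι_eJ _ (by simpa using h)]⟩
  | zero => exact ⟨∅, by simp⟩
  | add x y _ _ hx hy =>
    obtain ⟨J, hJ⟩ := hx
    obtain ⟨K, hK⟩ := hy
    refine ⟨J ∪ K, fun J' h => ?_⟩
    rw [Preadditive.add_comp, hJ _ (Finset.union_subset_left h), hK _ (Finset.union_subset_right h)]
  | neg x _ hx =>
    obtain ⟨J, hJ⟩ := hx
    exact ⟨J, fun J' h => by rw [Preadditive.neg_comp, hJ _ h]⟩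

lemma Cpt.of_iso {T T' : D} (e : T ≅ T') (h : Cpt T) : Cpt T' := fun I Y f => by
  simpa using finSub_precomp e.inv (h I Y (e.hom ≫ f))

lemma Cpt.of_equiv {D' : Type*} [Category.{u} D'] [Preadditive D'] [HasCoproducts.{u} D']
    (F : D ⥤ D') [F.IsEquivalence] [F.Additive] (T : D) (h : Cpt (F.obj T)) : Cpt T := by
  intro I Y f
  have h1 := h I (fun i => F.obj (Y i)) (F.map f ≫ (PreservesCoproduct.iso F Y).hom)
  have key : ∀ g : F.obj T ⟶ ∐ (fun i => F.obj (Y i)), g ∈ finSub (F.obj T) (fun i => F.obj (Y i)) →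
      F.preimage (g ≫ (PreservesCoproduct.iso F Y).inv) ∈ finSub T Y := by
    intro g hg
    induction hg using AddSubgroup.closure_induction with
    | mem x hx =>
      obtain ⟨i, g, rfl⟩ := hx
      refine AddSubgroup.subset_closure ⟨i, F.preimage g, ?_⟩
      apply F.map_injective
      simp
    | zero =>
      convert zero_mem (finSub T Y)
      apply F.map_injective
      simp
    | add x y _ _ hx hy =>
      convert add_mem hx hy
      apply F.map_injective
      simp
    | neg x _ hx =>
      convert neg_mem hx
      apply F.map_injective
      simp
  have := key _ h1
  rwa [Category.assoc, Iso.hom_inv_id, Category.comp_id, F.preimage_map] at this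

lemma eJ_univ {I : Type u} [Fintype I] (Y : I → D) : eJ Y Finset.univ = 𝟙 _ := by
  apply Sigma.hom_ext
  intro i
  rw [ι_eJ _ (Finset.mem_univ i), Category.comp_id]

lemma Cpt.sigma {I : Type u} [Fintype I] (Y : I → D) (h : ∀ i, Cpt (Y i)) : Cpt (∐ Y) := by
  intro I' Y' f
  rw [← Category.id_comp f, ← eJ_univ, eJ, Preadditive.sum_comp]
  refine sum_mem fun i _ => ?_
  rw [Category.assoc]
  exact finSub_precomp _ (h i _ _ _)

lemma exists_finite_factor {T : D} (hT : Cpt T) {I : Type u} (Y : I → D) (f : T ⟶ ∐ Y) :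
    ∃ (J : Finset I) (a : T ⟶ ∐ (fun i : {i // i ∈ J} => Y i))
      (b : (∐ (fun i : {i // i ∈ J} => Y i)) ⟶ ∐ Y), f = a ≫ b := by
  obtain ⟨J, hJ⟩ := exists_eJ (hT I Y f)
  refine ⟨J, ∑ i : {i // i ∈ J}, f ≫ prj Y i ≫ Sigma.ι (fun i : {i // i ∈ J} => Y i) i,
    Sigma.desc (fun i => Sigma.ι Y i), ?_⟩
  rw [Preadditive.sum_comp]
  conv_lhs => rw [← hJ J le_rfl, eJ, Preadditive.comp_sum, ← Finset.sum_coe_sort]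
  exact Finset.sum_congr rfl fun i _ => by simp

lemma rank_sigma_le (k : Type u) [Field k] [Linear k D] {I : Type u} [Fintype I] (Y : I → D)
    (X : D) (d : ℕ) (h : ∀ i, Module.rank k (Y i ⟶ X) ≤ d) :
    Module.rank k (∐ Y ⟶ X) ≤ ((Fintype.card I * d : ℕ) : Cardinal.{u}) := by
  let L : (∐ Y ⟶ X) →ₗ[k] (∀ i, Y i ⟶ X) := LinearMap.pi fun i => Linear.leftComp k X (Sigma.ι Y i)
  have hL : Function.Injective L := by
    intro a b hab
    apply Sigma.hom_ext
    intro i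
    exact congrFun hab i
  refine (LinearMap.rank_le_of_injective L hL).trans ?_
  rw [rank_pi]
  refine (Cardinal.sum_le_sum _ _ h).trans ?_
  simp

section Tri
variable [HasZeroObject D] [HasShift D ℤ] [∀ n : ℤ, (shiftFunctor D n).Additive] [Pretriangulated D]
open Pretriangulated

lemma Cpt.shift {T : D} (h : Cpt T) (n : ℤ) : Cpt (T⟦n⟧) :=
  Cpt.of_equiv (shiftFunctor D (-n)) _ (h.of_iso ((shiftShiftNeg T n).symm))

lemma Cpt.fiber (t : Triangle D) (ht : t ∈ distTriang D) (h₂ : Cpt t.obj₂) (h₃ : Cpt t.obj₃) :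
    Cpt t.obj₁ := by
  intro I Y f
  have ht' := inv_rot_of_distTriang _ ht
  let w : t.obj₃⟦(-1 : ℤ)⟧ ⟶ t.obj₁ := t.invRotate.mor₁
  obtain ⟨J, hJ⟩ := exists_eJ ((h₃.shift (-1)) I Y (w ≫ f))
  obtain ⟨g, hg⟩ := Triangle.yoneda_exact₂ _ ht' (f - f ≫ eJ Y J) (by
    change w ≫ (f - f ≫ eJ Y J) = 0
    rw [Preadditive.comp_sub, ← Category.assoc, hJ J le_rfl, sub_self])
  have : f = f ≫ eJ Y J + t.mor₁ ≫ g := by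
    have : f - f ≫ eJ Y J = t.mor₁ ≫ g := hg
    rw [← this]; abel
  rw [this]
  exact add_mem (comp_eJ_mem _ _ _) (finSub_precomp _ (h₂ _ _ _))

lemma rank_le_add {k V V' V'' : Type u} [Field k] [AddCommGroup V] [Module k V] [AddCommGroup V']
    [Module k V'] [AddCommGroup V''] [Module k V''] (W : Submodule k V) (r : V →ₗ[k] V')
    (p : V'' →ₗ[k] V) (h : LinearMap.ker r ≤ LinearMap.range p) :
    Module.rank k W ≤ Module.rank k (W.map r) + Module.rank k V'' := by
  rw [← LinearMap.rank_range_add_rank_ker (r.domRestrict W), LinearMap.range_domRestrict]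
  refine add_le_add le_rfl ?_
  have h1 : Module.rank k (LinearMap.ker (r.domRestrict W)) ≤ Module.rank k (LinearMap.ker r) := by
    refine LinearMap.rank_le_of_injective
      (LinearMap.restrict (p := LinearMap.ker (r.domRestrict W)) (q := LinearMap.ker r) W.subtype
        (fun x hx => by simpa using hx)) ?_
    intro a b hab
    ext
    simpa using congrArg Subtype.val hab
  exact h1.trans ((Submodule.rank_mono h).trans (rank_range_le p))

variable (S : ℤ → D)

/-- Ghost maps with cofibre built from coproducts of the objects `S j`. -/
structure Gh {G G' : D} (g : G ⟶ G') : Prop where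
  zero : ∀ (j : ℤ) (s : S j ⟶ G), s ≫ g = 0
  fac : ∀ (c : D) (f : c ⟶ G), f ≫ g = 0 →
    ∃ (I : Type u) (s : I → ℤ) (a : c ⟶ ∐ (fun i => S (s i))) (b : (∐ (fun i => S (s i))) ⟶ G),
      f = a ≫ b

lemma exists_gh (G : D) : ∃ (G' : D) (g : G ⟶ G'), Gh S g := by
  let I : Type u := Σ j : ℤ, (S j ⟶ G)
  let p : (∐ (fun i : I => S i.1)) ⟶ G := Sigma.desc (fun i => i.2)
  obtain ⟨G', g, h, hT⟩ := distinguished_cocone_triangle p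
  refine ⟨G', g, ?_, ?_⟩
  · intro j s
    have : s = Sigma.ι (fun i : I => S i.1) ⟨j, s⟩ ≫ p := by simp [p]
    rw [this, Category.assoc]
    have : p ≫ g = 0 := comp_distTriang_mor_zero₁₂ _ hT
    rw [this, comp_zero]
  · intro c f hf
    obtain ⟨a, ha⟩ := Triangle.coyoneda_exact₂ _ hT f hf
    exact ⟨I, fun i => i.1, a, p, ha⟩

def gg {G : ℕ → D} (g : ∀ n, G n ⟶ G (n + 1)) : ∀ n, G 0 ⟶ G n
  | 0 => 𝟙 _
  | n + 1 => gg g n ≫ g n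

lemma tower_bound (k : Type u) [Field k] [Linear k D] (hS : ∀ j, Cpt (S j))
    {G : ℕ → D} (g : ∀ n, G n ⟶ G (n + 1))
    (hg : ∀ n, Gh S (g n)) (n : ℕ) : ∀ (c : D) (_ : Cpt c) (f : c ⟶ G 0) (_ : f ≫ gg g n = 0),
    ∃ N : ℕ, ∀ (X : D) (d : ℕ), (∀ j, Module.rank k (S j ⟶ X) ≤ d) →
      Module.rank k (LinearMap.range (Linear.leftComp k X f)) ≤ ((N * d : ℕ) : Cardinal.{u}) := by
  induction n with
  | zero =>
    intro c _ f hf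
    refine ⟨0, fun X d _ => ?_⟩
    have hf : f = 0 := by simpa [gg] using hf
    have : LinearMap.range (Linear.leftComp k X f) = ⊥ := by
      rw [LinearMap.range_eq_bot]
      ext x
      simp [hf]
    rw [this]
    simp
  | succ n ih =>
    intro c hc f hf
    obtain ⟨I, s, a, b, hab⟩ := (hg n).fac c (f ≫ gg g n) (by simpa [gg] using hf)
    obtain ⟨J, a1, b1, rfl⟩ := exists_finite_factor hc _ a
    obtain ⟨c', w, h, hT⟩ := distinguished_cocone_triangle₁ a1
    have hc' : Cpt c' := Cpt.fiber _ hT hc (Cpt.sigma _ fun i => hS _)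
    have hz : w ≫ a1 = 0 := comp_distTriang_mor_zero₁₂ _ hT
    obtain ⟨N, hN⟩ := ih c' hc' (w ≫ f) (by
      rw [Category.assoc, hab, Category.assoc, ← Category.assoc, hz, zero_comp])
    refine ⟨N + Fintype.card {i // i ∈ J}, fun X d hd => ?_⟩
    refine (rank_le_add _ (Linear.leftComp k X w) (Linear.leftComp k X a1) ?_).trans ?_
    · intro x hx
      obtain ⟨y, hy⟩ := Triangle.yoneda_exact₂ _ hT x hx
      exact ⟨y, hy.symm⟩
    · rw [add_mul, Nat.cast_add]
      refine add_le_add ?_ (rank_sigma_le k _ X d fun i => hd _)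
      have hr : (LinearMap.range (Linear.leftComp k X f)).map (Linear.leftComp k X w) =
          LinearMap.range (Linear.leftComp k X (w ≫ f)) := by
        rw [← LinearMap.range_comp]
        congr 1
        ext x
        simp
      rw [hr]
      exact hN X d hd

lemma tower_zero (hS : ∀ j, Cpt (S j))
    (hgen : ∀ (X Y : D) (f : X ⟶ Y),
      (∀ j, Function.Bijective (fun s : S j ⟶ X => s ≫ f)) → IsIso f)
    {G : ℕ → D} (g : ∀ n, G n ⟶ G (n + 1))
    (hg : ∀ n, Gh S (g n)) (c : D) (hc : Cpt c) (f : c ⟶ G 0) : ∃ n, f ≫ gg g n = 0 := by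
  classical
  let Y : ULift.{u} ℕ → D := fun i => G i.down
  let sh : ∐ Y ⟶ ∐ Y := Sigma.desc (fun i => g i.down ≫ Sigma.ι Y ⟨i.down + 1⟩)
  have h0 : ∀ j (s : S j ⟶ ∐ Y), s ≫ sh = 0 := by
    intro j s
    have := hS j _ Y s
    induction this using AddSubgroup.closure_induction with
    | mem x hx =>
      obtain ⟨i, t, rfl⟩ := hx
      have := (hg i.down).zero j t
      simp only [sh, Category.assoc, colimit.ι_desc, Cofan.mk_ι_app]
      rw [← Category.assoc, this, zero_comp]
    | zero => simp
    | add x y _ _ hx hy => rw [Preadditive.add_comp, hx, hy, add_zero]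
    | neg x _ hx => rw [Preadditive.neg_comp, hx, neg_zero]
  have hiso : IsIso (𝟙 _ - sh) := by
    apply hgen
    intro j
    have : (fun s : S j ⟶ ∐ Y => s ≫ (𝟙 _ - sh)) = id := by
      ext s
      simp [Preadditive.comp_sub, h0]
    rw [this]
    exact Function.bijective_id
  let v : G 0 ⟶ ∐ Y := Sigma.ι Y ⟨0⟩ ≫ inv (𝟙 _ - sh)
  have hv : v = Sigma.ι Y ⟨0⟩ + v ≫ sh := by
    have : v ≫ (𝟙 _ - sh) = Sigma.ι Y ⟨0⟩ := by
      rw [Category.assoc, IsIso.inv_hom_id, Category.comp_id]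
    rw [← this, Preadditive.comp_sub, Category.comp_id]; abel
  have hsh : ∀ n, sh ≫ prj Y ⟨n + 1⟩ = prj Y ⟨n⟩ ≫ g n := by
    intro n
    apply Sigma.hom_ext
    rintro ⟨m⟩
    by_cases hm : m = n
    · subst hm
      simp only [sh, Sigma.ι_desc_assoc, Category.assoc]
      rw [ι_prj_self, ← Category.assoc, ι_prj_self]
      simp [Y]
    · simp only [sh, Sigma.ι_desc_assoc, Category.assoc]
      rw [ι_prj_ne _ (by simpa using hm), ← Category.assoc, ι_prj_ne _ (by simpa using hm)]
      simp
  have hsh0 : sh ≫ prj Y ⟨0⟩ = 0 := by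
    apply Sigma.hom_ext
    rintro ⟨m⟩
    simp only [sh, Sigma.ι_desc_assoc, Category.assoc]
    rw [ι_prj_ne _ (by simp)]
    simp
  have hvn : ∀ n, v ≫ prj Y ⟨n⟩ = gg g n := by
    intro n
    induction n with
    | zero => rw [hv, Preadditive.add_comp, Category.assoc, hsh0, ι_prj_self]; simp [gg, Y]
    | succ n ih =>
      rw [hv, Preadditive.add_comp, Category.assoc, hsh, ι_prj_ne _ (by simp), zero_add,
        ← Category.assoc, ih, gg]
  obtain ⟨J, hJ⟩ := exists_eJ (hc _ Y (f ≫ v))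
  obtain ⟨⟨n⟩, hn⟩ := Infinite.exists_notMem_finset J
  refine ⟨n, ?_⟩
  rw [← hvn, ← Category.assoc, ← hJ J le_rfl, Category.assoc, eJ, Preadditive.sum_comp,
    Finset.sum_eq_zero, comp_zero]
  intro i hi
  rw [Category.assoc, ι_prj_ne _ (by rintro rfl; exact hn hi), comp_zero]

theorem abstract_bound (k : Type u) [Field k] [Linear k D] (hS : ∀ j, Cpt (S j))
    (hgen : ∀ (X Y : D) (f : X ⟶ Y),
      (∀ j, Function.Bijective (fun s : S j ⟶ X => s ≫ f)) → IsIso f)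
    (c : D) (hc : Cpt c) :
    ∃ N : ℕ, ∀ (X : D) (d : ℕ), (∀ j, Module.rank k (S j ⟶ X) ≤ d) →
      Module.rank k (c ⟶ X) ≤ ((N * d : ℕ) : Cardinal.{u}) := by
  choose G' g' hg' using exists_gh S
  let G : ℕ → D := fun n => Nat.rec c (fun _ G => G' G) n
  let g : ∀ n, G n ⟶ G (n + 1) := fun n => g' (G n)
  have hg : ∀ n, Gh S (g n) := fun n => hg' (G n)
  obtain ⟨n, hn⟩ := tower_zero S hS hgen g hg c hc (𝟙 c)
  obtain ⟨N, hN⟩ := tower_bound S k hS g hg n c hc (𝟙 c) hn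
  refine ⟨N, fun X d hd => ?_⟩
  have := hN X d hd
  have h1 : LinearMap.range (Linear.leftComp k X (𝟙 c)) = ⊤ := by
    rw [LinearMap.range_eq_top]
    intro x
    exact ⟨x, by simp⟩
  have h2 := rank_top k (c ⟶ X)
  rw [← h2]
  exact (le_of_eq (by rw [← h1])).trans this

end Tri
end Abs
end HLB

namespace HLB
set_option linter.unusedSectionVars false
section C1
universe v w
variable {C : Type v} [Category.{u} C] [Abelian C] [HasDerivedCategory.{w} C]
open DerivedCategory HomologicalComplex

variable (P : C) [Projective P] (j : ℤ)

instance projX (n : ℤ) : Projective (((CochainComplex.singleFunctor C j).obj P).X n) := by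
  by_cases h : n = j
  · subst h
    exact Projective.of_iso (singleObjXSelf (.up ℤ) n P).symm inferInstance
  · exact Projective.of_iso ((isZero_zero C).iso (isZero_single_obj_X (.up ℤ) j P n h)) inferInstance

instance kproj : ((CochainComplex.singleFunctor C j).obj P).IsKProjective :=
  CochainComplex.isKProjective_of_projective _ j

lemma Q_full {K : CochainComplex C ℤ}
    (f : Q.obj ((CochainComplex.singleFunctor C j).obj P) ⟶ Q.obj K) :
    ∃ g : (CochainComplex.singleFunctor C j).obj P ⟶ K, Q.map g = f := by
  obtain ⟨g, hg⟩ := (CochainComplex.IsKProjective.Qh_map_bijective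
    ((CochainComplex.singleFunctor C j).obj P) ((HomotopyCategory.quotient _ _).obj K)).2
    ((quotientCompQhIso C).hom.app _ ≫ f ≫ (quotientCompQhIso C).inv.app _)
  obtain ⟨g, rfl⟩ := (HomotopyCategory.quotient _ _).map_surjective g
  refine ⟨g, ?_⟩
  have := quotientCompQhIso_hom_naturality g
  rw [hg] at this
  have h2 : ((quotientCompQhIso C).hom.app _ ≫ f ≫ (quotientCompQhIso C).inv.app K) ≫
      (quotientCompQhIso C).hom.app K = (quotientCompQhIso C).hom.app _ ≫ f := by
    rw [Category.assoc, Category.assoc]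
    have := (quotientCompQhIso C).inv_hom_id_app K
    refine congrArg _ ?_
    refine (congrArg (f ≫ ·) this).trans ?_
    exact Category.comp_id f
  exact (cancel_epi ((quotientCompQhIso C).hom.app _)).1 (this.symm.trans h2)

lemma H_inj0 {K : CochainComplex C ℤ} (g : (single C (.up ℤ) j).obj P ⟶ K)
    (hg : homologyMap g j = 0) : Nonempty (Homotopy g 0) := by
  let φ : P ⟶ K.X j := (singleObjXSelf (.up ℤ) j P).inv ≫ g.f j
  have hφ : φ ≫ K.d j (j+1) = 0 := by simp [φ]
  have h1 : K.liftCycles φ (j+1) (by simp) hφ ≫ K.homologyπ j = 0 := by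
    have : K.liftCycles φ (j+1) (by simp) hφ =
        (singleObjCyclesSelfIso (.up ℤ) j P).inv ≫ cyclesMap g j := by
      rw [← cancel_mono (K.iCycles j)]
      simp [φ, singleObjCyclesSelfIso]
    rw [this, Category.assoc, ← homologyπ_naturality, hg, comp_zero, comp_zero]
  have hex : (ShortComplex.mk (K.toCycles (j-1) j) (K.homologyπ j) (by simp)).Exact :=
    ShortComplex.exact_of_g_is_cokernel _ (K.homologyIsCokernel (j-1) j (by simp))
  let ψ := hex.liftFromProjective _ h1
  have hψ : ψ ≫ K.d (j-1) j = φ := by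
    have := hex.liftFromProjective_comp _ h1
    have h2 := congrArg (· ≫ K.iCycles j) this
    simpa [ψ] using h2
  refine ⟨CochainComplex.HomComplex.Cochain.equivHomotopy
    (F := (CochainComplex.singleFunctor C j).obj P) (G := K) g 0 |>.symm
    ⟨CochainComplex.HomComplex.Cochain.fromSingleMk ψ (by lia), ?_⟩⟩
  rw [CochainComplex.HomComplex.Cochain.δ_fromSingleMk ψ _ 0 j (by lia), hψ,
    CochainComplex.HomComplex.Cochain.ofHom_zero, add_zero]
  apply (CochainComplex.HomComplex.Cochain.fromSingleEquiv (p := j) (q := j) (n := 0) (by lia)).injective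
  simp only [CochainComplex.HomComplex.Cochain.fromSingleEquiv, φ]
  simp
  exact congrArg _ (CochainComplex.HomComplex.Cochain.ofHom_v
    (F := (CochainComplex.singleFunctor C j).obj P) g j)

lemma H_inj {K : CochainComplex C ℤ} (g : (CochainComplex.singleFunctor C j).obj P ⟶ K)
    (hg : homologyMap g j = 0) : Nonempty (Homotopy g 0) := H_inj0 P j g hg

lemma H_surj0 {K : CochainComplex C ℤ} (φ : ((single C (.up ℤ) j).obj P).homology j ⟶ K.homology j) :
    ∃ g : (single C (.up ℤ) j).obj P ⟶ K, homologyMap g j = φ := by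
  let ψ : P ⟶ K.cycles j :=
    Projective.factorThru ((singleObjHomologySelfIso (.up ℤ) j P).inv ≫ φ) (K.homologyπ j)
  refine ⟨mkHomFromSingle (ψ ≫ K.iCycles j) (by simp), ?_⟩
  rw [← cancel_epi (((single C (.up ℤ) j).obj P).homologyπ j), homologyπ_naturality]
  have : cyclesMap (mkHomFromSingle (ψ ≫ K.iCycles j) (by simp)) j =
      (singleObjCyclesSelfIso (.up ℤ) j P).hom ≫ ψ := by
    rw [← cancel_mono (K.iCycles j)]
    simp [singleObjCyclesSelfIso]
  rw [this, Category.assoc, Projective.factorThru_comp]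
  simp

lemma H_surj {K : CochainComplex C ℤ}
    (φ : ((CochainComplex.singleFunctor C j).obj P).homology j ⟶ K.homology j) :
    ∃ g : (CochainComplex.singleFunctor C j).obj P ⟶ K, homologyMap g j = φ := H_surj0 P j φ

/-- Comparison of the homology in the derived category and of complexes. -/
noncomputable def fac (K : CochainComplex C ℤ) :
    (homologyFunctor C j).obj (Q.obj K) ≅ K.homology j := (homologyFunctorFactors C j).app K

lemma fac_nat {K L : CochainComplex C ℤ} (g : K ⟶ L) :
    (homologyFunctor C j).map (Q.map g) ≫ (fac j L).hom = (fac j K).hom ≫ homologyMap g j :=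
  (homologyFunctorFactors C j).hom.naturality g

lemma fac_key {K L : CochainComplex C ℤ} (g : K ⟶ L) :
    (homologyFunctor C j).map (Q.map g) = (fac j K).hom ≫ homologyMap g j ≫ (fac j L).inv := by
  rw [← Category.assoc, ← fac_nat, Category.assoc, Iso.hom_inv_id, Category.comp_id]

/-- Homology detects morphisms from a projective placed in a single degree. -/
lemma H_bij_Q (K : CochainComplex C ℤ) : Function.Bijective
    (fun f : Q.obj ((CochainComplex.singleFunctor C j).obj P) ⟶ Q.obj K =>
      (homologyFunctor C j).map f) := by
  constructor
  · apply (injective_iff_map_eq_zero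
      ((homologyFunctor C j).mapAddHom (X := Q.obj ((CochainComplex.singleFunctor C j).obj P))
        (Y := Q.obj K))).2
    intro f hf
    obtain ⟨g, rfl⟩ := Q_full P j f
    have hf : (homologyFunctor C j).map (Q.map g) = 0 := hf
    rw [fac_key] at hf
    have h0 : homologyMap g j = 0 := by
      rw [← cancel_epi (fac j _).hom, ← cancel_mono (fac j K).inv, Category.assoc, hf]
      simp
    obtain ⟨h⟩ := H_inj P j g h0
    rw [Q_map_eq_of_homotopy C h, Functor.map_zero]
  · intro φ
    obtain ⟨g, hg⟩ := H_surj P j (K := K) ((fac j _).inv ≫ φ ≫ (fac j K).hom)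
    refine ⟨Q.map g, ?_⟩
    dsimp only
    rw [fac_key, hg]
    simp

lemma H_bij_Q' (K : CochainComplex C ℤ) : Function.Bijective
    (fun f : (singleFunctor C j).obj P ⟶ Q.obj K => (homologyFunctor C j).map f) :=
  H_bij_Q P j K

lemma H_bij (Y : DerivedCategory C) : Function.Bijective
    (fun f : (singleFunctor C j).obj P ⟶ Y => (homologyFunctor C j).map f) := by
  have e := Q.objObjPreimageIso Y
  have hb := H_bij_Q' P j (Q.objPreimage Y)
  have h1 : (fun f : (singleFunctor C j).obj P ⟶ Y => (homologyFunctor C j).map f) =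
    (fun φ => φ ≫ (homologyFunctor C j).map e.hom) ∘
    (fun f : (singleFunctor C j).obj P ⟶ Q.obj (Q.objPreimage Y) =>
      (homologyFunctor C j).map f) ∘ (fun f => f ≫ e.inv) := by
    funext f
    simp [← CategoryTheory.Functor.map_comp]
  rw [h1]
  refine Function.Bijective.comp ?_ (hb.comp ?_)
  · exact (((homologyFunctor C j).mapIso e).homToEquiv
      (Z := (homologyFunctor C j).obj ((singleFunctor C j).obj P))).bijective
  · exact (e.symm.homToEquiv (Z := (singleFunctor C j).obj P)).bijective

lemma gen_iff {X Y : DerivedCategory C} (f : X ⟶ Y) :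
    Function.Bijective (fun s : (singleFunctor C j).obj P ⟶ X => s ≫ f) ↔
    Function.Bijective (fun s : (homologyFunctor C j).obj ((singleFunctor C j).obj P) ⟶
      (homologyFunctor C j).obj X => s ≫ (homologyFunctor C j).map f) := by
  have hX := H_bij P j X
  have hY := H_bij P j Y
  have : (fun f : (singleFunctor C j).obj P ⟶ Y => (homologyFunctor C j).map f) ∘
      (fun s : (singleFunctor C j).obj P ⟶ X => s ≫ f) =
      (fun s : (homologyFunctor C j).obj ((singleFunctor C j).obj P) ⟶
      (homologyFunctor C j).obj X => s ≫ (homologyFunctor C j).map f) ∘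
      (fun f : (singleFunctor C j).obj P ⟶ X => (homologyFunctor C j).map f) := by
    funext s; simp
  rw [← Function.Bijective.of_comp_iff' hY, this, Function.Bijective.of_comp_iff _ hX]

/-- The homology of a single complex. -/
noncomputable def Hself : (homologyFunctor C j).obj ((singleFunctor C j).obj P) ≅ P :=
  fac j ((CochainComplex.singleFunctor C j).obj P) ≪≫ singleObjHomologySelfIso (.up ℤ) j P

end C1
end HLB

namespace HLB
set_option linter.unusedSectionVars false
section E
universe v w
variable {C : Type v} [Category.{u} C] [Abelian C] [HasCoproducts.{u} C]
open HomologicalComplex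

section chain
variable {I : Type u} (K : I → CochainComplex C ℤ)

/-- Degreewise coproduct of complexes. -/
noncomputable def dsum : CochainComplex C ℤ where
  X n := ∐ fun i => (K i).X n
  d n m := Limits.Sigma.map fun i => (K i).d n m
  shape n m h := by
    apply Sigma.hom_ext; intro i
    simp [(K i).shape n m h]
  d_comp_d' n m l _ _ := by
    apply Sigma.hom_ext; intro i
    simp

noncomputable def dι (i : I) : K i ⟶ dsum K where
  f n := Sigma.ι (fun i => (K i).X n) i
  comm' n m _ := by simp [dsum]

variable {K}

lemma dsum_ext {n : ℤ} {Z : C} {f g : (dsum K).X n ⟶ Z}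
    (h : ∀ i, (dι K i).f n ≫ f = (dι K i).f n ≫ g) : f = g := Sigma.hom_ext _ _ h

noncomputable def ddescX {n : ℤ} {Z : C} (f : ∀ i, (K i).X n ⟶ Z) : (dsum K).X n ⟶ Z :=
  Sigma.desc f

lemma dι_ddescX {n : ℤ} {Z : C} (f : ∀ i, (K i).X n ⟶ Z) (i : I) :
    (dι K i).f n ≫ ddescX f = f i := Sigma.ι_desc _ _

noncomputable def ddesc {L : CochainComplex C ℤ} (f : ∀ i, K i ⟶ L) : dsum K ⟶ L where
  f n := ddescX fun i => (f i).f n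
  comm' n m _ := by
    apply dsum_ext; intro i
    rw [← Category.assoc, dι_ddescX, ← Category.assoc, (dι K i).comm, Category.assoc, dι_ddescX,
      (f i).comm]

lemma dι_ddesc {L : CochainComplex C ℤ} (f : ∀ i, K i ⟶ L) (i : I) :
    dι K i ≫ ddesc f = f i := by
  ext n
  exact dι_ddescX _ _

/-- Null-homotopies glue. -/
lemma dsum_homotopy {L : CochainComplex C ℤ} (g : dsum K ⟶ L)
    (h : ∀ i, Nonempty (Homotopy (dι K i ≫ g) 0)) : Nonempty (Homotopy g 0) := by
  have h := fun i => (h i).some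
  refine ⟨{ hom := fun n m => ddescX fun i => (h i).hom n m, zero := ?_, comm := ?_ }⟩
  · intro n m hnm
    apply dsum_ext; intro i
    rw [dι_ddescX, (h i).zero n m hnm, comp_zero]
  · intro n
    apply dsum_ext; intro i
    have := (h i).comm n
    rw [zero_f, add_zero, comp_f] at this
    rw [zero_f, add_zero, this, Preadditive.comp_add, ← dNext_comp_left, ← prevD_comp_left]
    simp only [dι_ddescX]

open Classical in
noncomputable def dπ (i : I) : dsum K ⟶ K i :=
  ddesc fun j => if h : j = i then eqToHom (by rw [h]) else 0

lemma dι_dπ_self (i : I) : dι K i ≫ dπ i = 𝟙 _ := by simp [dπ, dι_ddesc]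
lemma dι_dπ_ne {i j : I} (h : j ≠ i) : dι K j ≫ dπ i = 0 := by simp [dπ, dι_ddesc, h]

noncomputable def dmap {K' : I → CochainComplex C ℤ} (s : ∀ i, K i ⟶ K' i) : dsum K ⟶ dsum K' :=
  ddesc fun i => s i ≫ dι K' i

lemma dι_dmap {K' : I → CochainComplex C ℤ} (s : ∀ i, K i ⟶ K' i) (i : I) :
    dι K i ≫ dmap s = s i ≫ dι K' i := dι_ddesc _ _

lemma hom_ext_dsum {L : CochainComplex C ℤ} {f g : dsum K ⟶ L}
    (h : ∀ i, dι K i ≫ f = dι K i ≫ g) : f = g := by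
  ext n
  apply dsum_ext; intro i
  simpa using congr_arg (fun t => t.f n) (h i)

lemma dmap_dπ {K' : I → CochainComplex C ℤ} (s : ∀ i, K i ⟶ K' i) (i : I) :
    dmap s ≫ dπ i = dπ i ≫ s i := by
  apply hom_ext_dsum; intro j
  rw [← Category.assoc, dι_dmap, Category.assoc, ← Category.assoc (dι K j)]
  by_cases h : j = i
  · subst h; rw [dι_dπ_self, dι_dπ_self]; simp
  · rw [dι_dπ_ne h, dι_dπ_ne h]; simp

noncomputable def dE (J : Finset I) : dsum K ⟶ dsum K := ∑ i ∈ J, dπ i ≫ dι K i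

lemma dι_dE {J : Finset I} {i : I} (h : i ∈ J) : dι K i ≫ dE J = dι K i := by
  rw [dE, Preadditive.comp_sum, Finset.sum_eq_single i]
  · rw [← Category.assoc, dι_dπ_self, Category.id_comp]
  · intro j _ hj
    rw [← Category.assoc, dι_dπ_ne hj.symm, zero_comp]
  · exact fun h' => (h' h).elim

lemma finSub_sum {T : C} {n : ℤ} (f : T ⟶ (dsum K).X n)
    (hf : f ∈ AddSubgroup.closure {h | ∃ (i : I) (g : T ⟶ (K i).X n), h = g ≫ (dι K i).f n}) :
    ∃ s : Finset I, ∀ t : Finset I, s ⊆ t → f ≫ (dE t).f n = f := by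
  classical
  induction hf using AddSubgroup.closure_induction with
  | mem x hx =>
    obtain ⟨i, g, rfl⟩ := hx
    refine ⟨{i}, fun t ht => ?_⟩
    rw [Category.assoc, ← comp_f, dι_dE (by simpa using ht)]
  | zero => exact ⟨∅, by simp⟩
  | add x y _ _ hx hy =>
    obtain ⟨J, hJ⟩ := hx
    obtain ⟨K, hK⟩ := hy
    refine ⟨J ∪ K, fun J' h => ?_⟩
    rw [Preadditive.add_comp, hJ _ (Finset.union_subset_left h), hK _ (Finset.union_subset_right h)]
  | neg x _ hx =>
    obtain ⟨J, hJ⟩ := hx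
    exact ⟨J, fun J' h => by rw [Preadditive.neg_comp, hJ _ h]⟩

lemma single_sum0 (P : C) (hP : Cpt P) (j : ℤ) (g : (single C (.up ℤ) j).obj P ⟶ dsum K) :
    ∃ s : Finset I, g ≫ dE s = g := by
  obtain ⟨s, hs⟩ := finSub_sum (K := K) ((singleObjXSelf (.up ℤ) j P).inv ≫ g.f j) (hP _ _ _)
  refine ⟨s, ?_⟩
  apply from_single_hom_ext
  rw [← cancel_epi (singleObjXSelf (.up ℤ) j P).inv, ← hs s subset_rfl, comp_f, Category.assoc]

lemma single_sum (P : C) (hP : Cpt P) (j : ℤ)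
    (g : (CochainComplex.singleFunctor C j).obj P ⟶ dsum K) :
    ∃ s : Finset I, g ≫ dE s = g := single_sum0 P hP j g

end chain

open DerivedCategory

variable [HasDerivedCategory.{u} C] (P : C) [Projective P] (hP : Cpt P)
  (hPgen : ∀ (M N : C) (f : M ⟶ N), Function.Bijective (fun s : P ⟶ M => s ≫ f) → IsIso f)

include hPgen in
lemma hgenD {X Y : DerivedCategory C} (f : X ⟶ Y) (h : ∀ j, Function.Bijective
    (fun s : (singleFunctor C j).obj P ⟶ X => s ≫ f)) : IsIso f := by
  rw [DerivedCategory.isIso_iff]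
  intro j
  apply hPgen
  have h1 := (gen_iff P j f).1 (h j)
  have e := Hself P j
  have h2 : (fun s : P ⟶ (homologyFunctor C j).obj X => s ≫ (homologyFunctor C j).map f) =
      (e.homFromEquiv (Z := (homologyFunctor C j).obj Y)) ∘
      (fun s : (homologyFunctor C j).obj ((singleFunctor C j).obj P) ⟶
      (homologyFunctor C j).obj X => s ≫ (homologyFunctor C j).map f) ∘
      (e.symm.homFromEquiv (Z := (homologyFunctor C j).obj X)) := by
    funext s; simp
  rw [h2]
  exact (Equiv.bijective _).comp (h1.comp (Equiv.bijective _))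

section
variable {I : Type u} (K : I → CochainComplex C ℤ)

include hP in
lemma fin_Q (j : ℤ) (f : (singleFunctor C j).obj P ⟶ Q.obj (dsum K)) :
    ∃ s : Finset I, f = ∑ i ∈ s, (f ≫ Q.map (dπ i)) ≫ Q.map (dι K i) := by
  obtain ⟨g, rfl⟩ : ∃ g : (CochainComplex.singleFunctor C j).obj P ⟶ dsum K, Q.map g = f :=
    Q_full P j f
  obtain ⟨s, hs⟩ := single_sum P hP j g
  refine ⟨s, ?_⟩
  have h1 : Q.map g = Q.map (∑ i ∈ s, (g ≫ dπ i) ≫ dι K i) := by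
    conv_lhs => rw [← hs, dE, Preadditive.comp_sum]
    simp only [Category.assoc]
  refine h1.trans ?_
  rw [Functor.map_sum]
  refine Finset.sum_congr rfl fun i _ => ?_
  rw [Functor.map_comp, Functor.map_comp]
  rfl

include hP hPgen in
lemma isIso_dmap {K K' : I → CochainComplex C ℤ} (s : ∀ i, K i ⟶ K' i)
    (hs : ∀ i, IsIso (Q.map (s i))) : IsIso (Q.map (dmap s)) := by
  apply hgenD P hPgen
  intro j
  constructor
  · apply (injective_iff_map_eq_zero (Preadditive.rightComp ((singleFunctor C j).obj P)
      (Q.map (dmap s)))).2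
    intro f hf
    have hf : f ≫ Q.map (dmap s) = 0 := hf
    obtain ⟨t, ht⟩ := fin_Q P hP K j f
    rw [ht]
    refine Finset.sum_eq_zero fun i _ => ?_
    have : f ≫ Q.map (dπ i) = 0 := by
      rw [← cancel_mono (Q.map (s i)), Category.assoc, ← Functor.map_comp, ← dmap_dπ,
        Functor.map_comp, ← Category.assoc, hf]
      simp
    rw [this, zero_comp]
  · intro f
    obtain ⟨t, ht⟩ := fin_Q P hP K' j f
    refine ⟨∑ i ∈ t, (f ≫ Q.map (dπ i)) ≫ inv (Q.map (s i)) ≫ Q.map (dι K i), ?_⟩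
    dsimp only
    rw [Preadditive.sum_comp]
    conv_rhs => rw [ht]
    refine Finset.sum_congr rfl fun i _ => ?_
    rw [Category.assoc, Category.assoc (inv _), ← Functor.map_comp, dι_dmap, Functor.map_comp,
      IsIso.inv_hom_id_assoc]

lemma Q_zero_precomp {K L : CochainComplex C ℤ} (g : K ⟶ L) (hg : Q.map g = 0) :
    ∃ (K' : CochainComplex C ℤ) (t : K' ⟶ K) (_ : IsIso (Q.map t)), Nonempty (Homotopy (t ≫ g) 0) := by
  have h0 : Qh.map ((HomotopyCategory.quotient C (.up ℤ)).map g) =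
      Qh.map ((HomotopyCategory.quotient C (.up ℤ)).map 0) := by
    have h1 := quotientCompQhIso_hom_naturality g
    have h2 := quotientCompQhIso_hom_naturality (0 : K ⟶ L)
    rw [hg] at h1
    rw [Functor.map_zero Q] at h2
    exact (cancel_mono ((quotientCompQhIso C).hom.app L)).1 (h1.trans h2.symm)
  obtain ⟨X, s, hs, h⟩ := (MorphismProperty.map_eq_iff_precomp Qh
    (HomotopyCategory.quasiIso C (.up ℤ)) _ _).1 h0
  obtain ⟨X, rfl⟩ := HomotopyCategory.quotient_obj_surjective X
  obtain ⟨s, rfl⟩ := (HomotopyCategory.quotient _ _).map_surjective s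
  rw [← isIso_Qh_map_iff] at hs
  refine ⟨X, s, hs, ⟨HomotopyCategory.homotopyOfEq _ _ ?_⟩⟩
  rw [Functor.map_comp, h, ← Functor.map_comp, comp_zero]

include hP hPgen in
lemma dsum_uniq {L : CochainComplex C ℤ} (f : Q.obj (dsum K) ⟶ Q.obj L)
    (hf : ∀ i, Q.map (dι K i) ≫ f = 0) : f = 0 := by
  obtain ⟨L', g, s, hs, rfl⟩ := left_fac f
  have hg : ∀ i, Q.map (dι K i ≫ g) = 0 := fun i => by
    rw [Functor.map_comp, ← cancel_mono (inv (Q.map s)), Category.assoc, hf, zero_comp]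
  choose K' t ht h using fun i => Q_zero_precomp _ (hg i)
  have h1 : Nonempty (Homotopy (dmap t ≫ g) 0) := dsum_homotopy _ fun i => by
    rw [← Category.assoc, dι_dmap, Category.assoc]
    exact h i
  have h2 : Q.map g = 0 := by
    have := isIso_dmap P hP hPgen t ht
    rw [← cancel_epi (Q.map (dmap t)), ← Functor.map_comp, Q_map_eq_of_homotopy C h1.some]
    simp
  rw [h2, zero_comp]

include hP hPgen in
lemma dsum_exists {L : CochainComplex C ℤ} (f : ∀ i, Q.obj (K i) ⟶ Q.obj L) :
    ∃ g : Q.obj (dsum K) ⟶ Q.obj L, ∀ i, Q.map (dι K i) ≫ g = f i := by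
  choose K' s hs g hg using fun i => right_fac (f i)
  have := isIso_dmap P hP hPgen s hs
  refine ⟨inv (Q.map (dmap s)) ≫ Q.map (ddesc g), fun i => ?_⟩
  rw [hg, ← cancel_epi (Q.map (s i)), IsIso.hom_inv_id_assoc, ← Category.assoc,
    ← Functor.map_comp, ← dι_dmap, Functor.map_comp, Category.assoc, IsIso.hom_inv_id_assoc,
    ← Functor.map_comp, dι_ddesc]

include hP hPgen in
lemma dsum_exists' {Y : DerivedCategory C} (f : ∀ i, Q.obj (K i) ⟶ Y) :
    ∃ g : Q.obj (dsum K) ⟶ Y, ∀ i, Q.map (dι K i) ≫ g = f i := by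
  have e := Q.objObjPreimageIso Y
  obtain ⟨g, hg⟩ := dsum_exists P hP hPgen K (fun i => f i ≫ e.inv)
  exact ⟨g ≫ e.hom, fun i => by rw [← Category.assoc, hg]; simp⟩

include hP hPgen in
lemma dsum_uniq' {Y : DerivedCategory C} (f f' : Q.obj (dsum K) ⟶ Y)
    (hf : ∀ i, Q.map (dι K i) ≫ f = Q.map (dι K i) ≫ f') : f = f' := by
  have e := Q.objObjPreimageIso Y
  have := dsum_uniq P hP hPgen K ((f - f') ≫ e.inv) fun i => by
    rw [← Category.assoc, Preadditive.comp_sub, hf]; simp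
  rw [← sub_eq_zero, ← cancel_mono e.inv, this, zero_comp]

include hP hPgen in
lemma dsum_colim : Nonempty (IsColimit (Cofan.mk (Q.obj (dsum K)) fun i => Q.map (dι K i))) := by
  choose g hg using fun (c : Cofan fun i => Q.obj (K i)) => dsum_exists' P hP hPgen K c.inj
  exact ⟨Cofan.IsColimit.mk _ g hg fun c m hm => dsum_uniq' P hP hPgen K _ _ fun i =>
    (hm i).trans (hg c i).symm⟩

end

include hP hPgen in
lemma hasCoprod : HasCoproducts.{u} (DerivedCategory C) := fun I => ⟨fun F => by
  have hc : HasCoproduct (fun i => Q.obj (Q.objPreimage (F.obj ⟨i⟩))) := by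
    exact ⟨⟨_, (dsum_colim P hP hPgen (fun i : I => Q.objPreimage (F.obj ⟨i⟩))).some⟩⟩
  have e : Discrete.functor (fun i => Q.obj (Q.objPreimage (F.obj ⟨i⟩))) ≅ F :=
    Discrete.natIso fun i => Q.objObjPreimageIso (F.obj ⟨i.as⟩)
  exact hasColimit_of_iso e.symm⟩

include hP hPgen in
lemma cptS [HasCoproducts.{u} (DerivedCategory C)] (j : ℤ) : Cpt ((singleFunctor C j).obj P) := by
  intro I Y f
  let K : I → CochainComplex C ℤ := fun i => Q.objPreimage (Y i)
  let e : ∀ i, Q.obj (K i) ≅ Y i := fun i => Q.objObjPreimageIso (Y i)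
  obtain ⟨b, hb⟩ := dsum_exists' P hP hPgen K (fun i => (e i).hom ≫ Sigma.ι Y i)
  let a : ∐ Y ⟶ Q.obj (dsum K) := Sigma.desc fun i => (e i).inv ≫ Q.map (dι K i)
  have hab : a ≫ b = 𝟙 _ := by
    apply Sigma.hom_ext; intro i
    simp [a, hb]
  obtain ⟨s, hs⟩ := fin_Q P hP K j (f ≫ a)
  have : f = ∑ i ∈ s, (((f ≫ a) ≫ Q.map (dπ i)) ≫ (e i).hom) ≫ Sigma.ι Y i := by
    have h1 : f = (f ≫ a) ≫ b := by rw [Category.assoc, hab, Category.comp_id]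
    rw [h1]
    conv_lhs => rw [hs]
    rw [Preadditive.sum_comp]
    refine Finset.sum_congr rfl fun i _ => ?_
    rw [← h1, Category.assoc _ _ b, hb, Category.assoc _ (e i).hom]
  rw [this]
  exact sum_mem fun i _ => AddSubgroup.subset_closure ⟨i, _, rfl⟩

end E
end HLB

namespace HLB
set_option linter.unusedSectionVars false
section M
variable (R : Type u) [Ring R]

/-- The regular module. -/
abbrev reg : ModuleCat.{u} R := ModuleCat.of R R

instance projReg : Projective (reg R) :=
  ModuleCat.projective_of_free (Module.Basis.singleton Unit R)

/-- Value at one. -/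
def at1 {M : ModuleCat.{u} R} (f : reg R ⟶ M) : M := f.hom (1 : R)

lemma reg_ext {M : ModuleCat.{u} R} {f g : reg R ⟶ M} (h : at1 R f = at1 R g) : f = g := by
  ext; exact h

lemma at1_comp {M N : ModuleCat.{u} R} (f : reg R ⟶ M) (g : M ⟶ N) :
    at1 R (f ≫ g) = g.hom (at1 R f) := rfl

/-- The map from the regular module with given value at one. -/
def regMk {M : ModuleCat.{u} R} (m : M) : reg R ⟶ M := ModuleCat.ofHom (LinearMap.toSpanSingleton R M m)

lemma at1_regMk {M : ModuleCat.{u} R} (m : M) : at1 R (regMk R m) = m := by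
  simp [regMk, at1]

lemma regMk_at1 {M : ModuleCat.{u} R} (f : reg R ⟶ M) : regMk R (at1 R f) = f :=
  reg_ext R (at1_regMk R _)

lemma regMk_comp {M N : ModuleCat.{u} R} (m : M) (g : M ⟶ N) :
    regMk R m ≫ g = regMk R (g.hom m) := by
  apply reg_ext
  rw [at1_comp, at1_regMk, at1_regMk]

lemma regMk_zero {M : ModuleCat.{u} R} : regMk R (0 : M) = 0 :=
  reg_ext R (by rw [at1_regMk]; rfl)

lemma regMk_add {M : ModuleCat.{u} R} (x y : M) : regMk R (x + y) = regMk R x + regMk R y := by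
  apply reg_ext
  rw [at1_regMk]
  refine Eq.trans ?_ (congrArg₂ (· + ·) (at1_regMk R x).symm.symm (at1_regMk R y)).symm
  rfl

lemma regGen (M N : ModuleCat.{u} R) (f : M ⟶ N)
    (h : Function.Bijective (fun s : reg R ⟶ M => s ≫ f)) : IsIso f := by
  rw [ConcreteCategory.isIso_iff_bijective]
  constructor
  · intro x y hxy
    have hxy : f.hom x = f.hom y := hxy
    have h1 : regMk R x = regMk R y := h.1 (by
      dsimp only
      rw [regMk_comp, regMk_comp, hxy])
    rw [← at1_regMk R x, h1, at1_regMk]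
  · intro y
    obtain ⟨s, hs⟩ := h.2 (regMk R y)
    refine ⟨at1 R s, ?_⟩
    refine (at1_comp R s f).symm.trans ?_
    refine (congrArg (at1 R) hs).trans (at1_regMk R y)

open scoped DirectSum in
lemma cptReg : Cpt (reg R) := by
  classical
  intro I Y f
  have key : ∀ x : ModuleCat.of R (⨁ i, Y i), regMk R x ≫
      (ModuleCat.coprodIsoDirectSum Y).inv ∈ finSub (reg R) Y := by
    intro x
    induction x using DirectSum.induction_on with
    | zero =>
      have h := regMk_zero R (M := ModuleCat.of R (⨁ i, Y i))
      refine (congrArg (fun t => t ≫ (ModuleCat.coprodIsoDirectSum Y).inv ∈ finSub (reg R) Y)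
        h).mpr ?_
      rw [zero_comp]
      exact zero_mem _
    | of i y =>
      refine AddSubgroup.subset_closure ⟨i, regMk R y, ?_⟩
      rw [← ModuleCat.lof_coprodIsoDirectSum_inv, ← Category.assoc]
      exact congrArg (· ≫ (ModuleCat.coprodIsoDirectSum Y).inv) (regMk_comp R y
        (ModuleCat.ofHom (DirectSum.lof R I (fun i => Y i) i))).symm
    | add x y hx hy =>
      have h := regMk_add R (M := ModuleCat.of R (⨁ i, Y i)) x y
      refine (congrArg (fun t => t ≫ (ModuleCat.coprodIsoDirectSum Y).inv ∈ finSub (reg R) Y)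
        h).mpr ?_
      rw [Preadditive.add_comp]
      exact add_mem hx hy
  have := key (at1 R (f ≫ (ModuleCat.coprodIsoDirectSum Y).hom))
  rw [regMk_at1, Category.assoc, Iso.hom_inv_id, Category.comp_id] at this
  exact this

variable [HasDerivedCategory.{u} (ModuleCat.{u} R)]

instance hasCoprodMod : HasCoproducts.{u} (DerivedCategory (ModuleCat.{u} R)) :=
  hasCoprod (reg R) (cptReg R) (regGen R)

/-- The regular module in degree `j`. -/
noncomputable def SS (j : ℤ) : DerivedCategory (ModuleCat.{u} R) :=
  (DerivedCategory.singleFunctor (ModuleCat.{u} R) j).obj (reg R)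

lemma cptSS (j : ℤ) : Cpt (SS R j) := cptS (reg R) (cptReg R) (regGen R) j

lemma hgenSS {X Y : DerivedCategory (ModuleCat.{u} R)} (f : X ⟶ Y)
    (h : ∀ j, Function.Bijective (fun s : SS R j ⟶ X => s ≫ f)) : IsIso f :=
  hgenD (reg R) (regGen R) f h

/-- The canonical class in the homology of the regular module. -/
noncomputable def one (j : ℤ) :
    (DerivedCategory.homologyFunctor (ModuleCat.{u} R) j).obj (SS R j) :=
  (Hself (reg R) j).inv.hom (1 : R)

/-- Evaluation of a map in the derived category. -/
noncomputable def ev (j : ℤ) {X : DerivedCategory (ModuleCat.{u} R)} (f : SS R j ⟶ X) :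
    (DerivedCategory.homologyFunctor (ModuleCat.{u} R) j).obj X :=
  ((DerivedCategory.homologyFunctor (ModuleCat.{u} R) j).map f).hom (one R j)

lemma ev_bij (j : ℤ) (X : DerivedCategory (ModuleCat.{u} R)) :
    Function.Bijective (ev R j (X := X)) := by
  have h1 := H_bij (reg R) j X
  have h2 : Function.Bijective (fun t : reg R ⟶
      (DerivedCategory.homologyFunctor (ModuleCat.{u} R) j).obj X => t.hom (1 : R)) :=
    ⟨fun a b h => reg_ext R h, fun m => ⟨regMk R m, at1_regMk R m⟩⟩
  exact h2.comp (((Hself (reg R) j).homFromEquiv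
    (Z := (DerivedCategory.homologyFunctor (ModuleCat.{u} R) j).obj X)).bijective.comp h1)

lemma ev_add (j : ℤ) {X : DerivedCategory (ModuleCat.{u} R)} (f g : SS R j ⟶ X) :
    ev R j (f + g) = ev R j f + ev R j g := by
  simp [ev, Functor.map_add]

lemma ev_precomp (j : ℤ) (e : SS R j ⟶ SS R j) :
    ∃ b : R, ∀ (X : DerivedCategory (ModuleCat.{u} R)) (f : SS R j ⟶ X),
      ev R j (e ≫ f) = b • ev R j f := by
  refine ⟨(Hself (reg R) j).hom.hom (ev R j e), fun X f => ?_⟩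
  have h : ev R j e = ((Hself (reg R) j).hom.hom (ev R j e) : R) • one R j := by
    have h1 : (Hself (reg R) j).inv.hom ((Hself (reg R) j).hom.hom (ev R j e)) = ev R j e := by
      simp
      rfl
    have h2 : ((Hself (reg R) j).hom.hom (ev R j e) : R) =
      ((Hself (reg R) j).hom.hom (ev R j e) : R) • (1 : R) := by simp
    refine h1.symm.trans ?_
    refine (congrArg (Hself (reg R) j).inv.hom h2).trans ?_
    exact map_smul (Hself (reg R) j).inv.hom _ _
  have h3 : ev R j (e ≫ f) =
    ((DerivedCategory.homologyFunctor (ModuleCat.{u} R) j).map f).hom (ev R j e) := by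
    rw [ev, Functor.map_comp]
    rfl
  rw [h3]
  refine (congrArg _ h).trans ?_
  exact map_smul ((DerivedCategory.homologyFunctor (ModuleCat.{u} R) j).map f).hom _ _

end M
end HLB

namespace HLB
set_option linter.unusedSectionVars false
section N
variable (k : Type u) [Field k] (R : Type u) [Ring R] [Algebra k R] 
  [HasDerivedCategory.{u} (ModuleCat.{u} R)]

lemma homologyMap_smul' {C : Type*} [Category C] [Abelian C] [Linear k C]
    {K L : CochainComplex C ℤ} (r : k) (f : K ⟶ L) (j : ℤ) :
    HomologicalComplex.homologyMap (r • f) j = r • HomologicalComplex.homologyMap f j :=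
  ShortComplex.homologyMap_smul ((HomologicalComplex.shortComplexFunctor C (.up ℤ) j).map f) r

lemma homology_smul_id {C : Type*} [Category.{u} C] [Abelian C] [Linear k C]
    [HasDerivedCategory.{u} C]
    (K : CochainComplex C ℤ) (r : k) (j : ℤ) :
    (DerivedCategory.homologyFunctor C j).map (r • 𝟙 (DerivedCategory.Q.obj K)) = r • 𝟙 _ := by
  rw [← CategoryTheory.Functor.map_id, ← CategoryTheory.Functor.map_smul, fac_key, homologyMap_smul',
    HomologicalComplex.homologyMap_id]
  simp

lemma ev_smul (j : ℤ) {X : DerivedCategory (ModuleCat.{u} R)} (r : k) (f : SS R j ⟶ X) :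
    ev R j (r • f) = algebraMap k R r • ev R j f := by
  have h0 : (DerivedCategory.homologyFunctor (ModuleCat.{u} R) j).map (r • 𝟙 (SS R j)) = r • 𝟙 _ :=
    homology_smul_id k ((CochainComplex.singleFunctor (ModuleCat.{u} R) j).obj (reg R)) r j
  have h1 : r • f = (r • 𝟙 (SS R j)) ≫ f := by simp
  rw [h1, ev, Functor.map_comp, h0]
  exact map_smul ((DerivedCategory.homologyFunctor (ModuleCat.{u} R) j).map f).hom
    (algebraMap k R r) (one R j)

variable [FiniteDimensional k R]
noncomputable def evLin (j : ℤ) (X : DerivedCategory (ModuleCat.{u} R)) :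
    (SS R j ⟶ X) →ₗ[k] ((ModuleCat.restrictScalars (algebraMap k R)).obj (Hobj R j X)) where
  toFun f := ev R j f
  map_add' := ev_add R j
  map_smul' r f := ev_smul k R j r f

lemma rank_hom_le (j : ℤ) (X : DerivedCategory (ModuleCat.{u} R)) (hX : FinCoh k R X) :
    Module.rank k (SS R j ⟶ X) ≤ hdim k R j X := by
  have := hX j
  rw [hdim, Module.finrank_eq_rank]
  exact LinearMap.rank_le_of_injective (evLin k R j X) (ev_bij R j X).1

lemma hdim_le_hl (j : ℤ) (X : DerivedCategory (ModuleCat.{u} R)) (hX : Bdd R X) :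
    hdim k R j X ≤ hl k R X := by
  refine le_csSup ?_ (Set.mem_range_self j)
  obtain ⟨a, b, h⟩ := hX
  apply Set.Finite.bddAbove
  refine (((Set.finite_Icc a b).image (fun i => hdim k R i X)).union (Set.finite_singleton 0)).subset ?_
  rintro _ ⟨i, rfl⟩
  by_cases hi : i < a ∨ b < i
  · right
    have : Subsingleton (Hobj R i X) := ModuleCat.subsingleton_of_isZero (h i hi)
    have : Subsingleton ((ModuleCat.restrictScalars (algebraMap k R)).obj (Hobj R i X)) := this
    exact Module.finrank_zero_of_subsingleton
  · left
    push Not at hi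
    exact ⟨i, hi, rfl⟩

noncomputable def shiftH (n i : ℤ) (X : DerivedCategory (ModuleCat.{u} R)) :
    Hobj R i (X⟦n⟧) ≅ Hobj R (n + i) X :=
  ((DerivedCategory.homologyFunctor (ModuleCat.{u} R) 0).shiftIso n i (n + i) rfl).app X

lemma hdim_shift (n i : ℤ) (X : DerivedCategory (ModuleCat.{u} R)) :
    hdim k R i (X⟦n⟧) = hdim k R (n + i) X :=
  LinearEquiv.finrank_eq
    ((ModuleCat.restrictScalars (algebraMap k R)).mapIso (shiftH R n i X)).toLinearEquiv

lemma hdim_iso (i : ℤ) {X Y : DerivedCategory (ModuleCat.{u} R)} (e : X ≅ Y) :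
    hdim k R i X = hdim k R i Y :=
  LinearEquiv.finrank_eq
    ((ModuleCat.restrictScalars (algebraMap k R)).mapIso
      ((DerivedCategory.homologyFunctor (ModuleCat.{u} R) i).mapIso e)).toLinearEquiv

lemma finCoh_shift (n : ℤ) (X : DerivedCategory (ModuleCat.{u} R)) (h : FinCoh k R X) :
    FinCoh k R (X⟦n⟧) := fun i => by
  have := h (n + i)
  exact LinearEquiv.finiteDimensional
    ((ModuleCat.restrictScalars (algebraMap k R)).mapIso (shiftH R n i X)).symm.toLinearEquiv

lemma finrank_gen (M : ModuleCat.{u} R) (r : ℕ) (m : Fin r → M)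
    (h : Submodule.span R (Set.range m) = ⊤) :
    Module.finrank k ((ModuleCat.restrictScalars (algebraMap k R)).obj M) ≤
      r * Module.finrank k R := by
  let φ : (Fin r → R) →ₗ[k] ((ModuleCat.restrictScalars (algebraMap k R)).obj M) :=
    { toFun := fun c => Fintype.linearCombination R m c
      map_add' := fun a b => map_add (Fintype.linearCombination R m) a b
      map_smul' := fun a b => by
        refine Eq.trans ?_ (map_smul (Fintype.linearCombination R m) (algebraMap k R a) b)
        congr 1
        ext i
        simp [Algebra.smul_def] }
  have hφ : Function.Surjective φ := by
    have : Function.Surjective (Fintype.linearCombination R m) := by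
      rw [← LinearMap.range_eq_top, Fintype.range_linearCombination, h]
    exact this
  have := LinearMap.finrank_le_finrank_of_surjective hφ
  simpa [Module.finrank_pi_fintype] using this

end N

section Main
variable (k : Type u) [Field k] (A : Type u) [Ring A] [Algebra k A] [FiniteDimensional k A]
    [HasDerivedCategory.{u} (ModuleCat.{u} A)]
    (B : Type u) [Ring B] [Algebra k B] [FiniteDimensional k B]
    [HasDerivedCategory.{u} (ModuleCat.{u} B)]
    (F : DerivedCategory (ModuleCat.{u} A) ⥤ DerivedCategory (ModuleCat.{u} B))
    [F.CommShift ℤ] [F.IsTriangulated] [F.IsEquivalence]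

lemma zero_bound (T X : DerivedCategory (ModuleCat.{u} A)) (e : F.obj T ≅ SS B 0) (n : ℕ)
    (hn : Module.rank k (T ⟶ X) ≤ n) : hdim k B 0 (F.obj X) ≤ n * Module.finrank k B := by
  have hF : F.Additive := inferInstance
  have hfin : Module.Finite k (T ⟶ X) := by
    rw [← Module.rank_lt_aleph0_iff]
    exact hn.trans_lt (Cardinal.natCast_lt_aleph0)
  have hle : Module.finrank k (T ⟶ X) ≤ n := by
    rw [← Module.finrank_eq_rank] at hn
    exact_mod_cast hn
  let bs := Module.finBasis k (T ⟶ X)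
  let φ : (T ⟶ X) → Hobj B 0 (F.obj X) := fun v => ev B 0 (e.inv ≫ F.map v)
  have hadd : ∀ v w, φ (v + w) = φ v + φ w := fun v w => by
    simp only [φ, F.map_add, Preadditive.comp_add]
    exact ev_add B 0 _ _
  have hzero : φ 0 = 0 := by simpa using hadd 0 0
  have hsurj : ∀ y, ∃ v, φ v = y := fun y => by
    obtain ⟨f, hf⟩ := (ev_bij B 0 (F.obj X)).2 y
    refine ⟨F.preimage (e.hom ≫ f), ?_⟩
    simp [φ, hf]
  have hsmul : ∀ (r : k), ∃ b : B, ∀ v, φ (r • v) = b • φ v := fun r => by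
    obtain ⟨b, hb⟩ := ev_precomp B 0 (e.inv ≫ F.map (r • 𝟙 T) ≫ e.hom)
    refine ⟨b, fun v => ?_⟩
    have : r • v = (r • 𝟙 T) ≫ v := by simp
    refine Eq.trans ?_ (hb _ (e.inv ≫ F.map v))
    simp only [φ, this, F.map_comp]
    simp
    rfl
  refine (finrank_gen k B _ _ (fun i => φ (bs i)) ?_).trans (Nat.mul_le_mul_right _ hle)
  rw [eq_top_iff]
  rintro y -
  obtain ⟨v, rfl⟩ := hsurj y
  have hv : v ∈ Submodule.span k (Set.range bs) := by rw [bs.span_eq]; trivial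
  induction hv using Submodule.span_induction with
  | mem x hx =>
    obtain ⟨i, rfl⟩ := hx
    exact Submodule.subset_span ⟨i, rfl⟩
  | zero => rw [hzero]; exact zero_mem _
  | add x y _ _ hx hy => rw [hadd]; exact add_mem hx hy
  | smul r x _ hx =>
    obtain ⟨b, hb⟩ := hsmul r
    rw [hb]
    exact Submodule.smul_mem _ _ hx

theorem main : ∃ N₁ : ℕ, ∀ X : DerivedCategory (ModuleCat.{u} A), InDb k A X →
      hl k B (F.obj X) ≤ N₁ * hl k A X := by
  have hF : F.Additive := inferInstance
  let T := F.objPreimage (SS B 0)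
  let e : F.obj T ≅ SS B 0 := F.objObjPreimageIso (SS B 0)
  have hT : Cpt T := Cpt.of_equiv F T ((cptSS B 0).of_iso e.symm)
  obtain ⟨N, hN⟩ := abstract_bound (SS A) k (cptSS A) (fun X Y f h => hgenSS A f h) T hT
  refine ⟨N * Module.finrank k B, fun X hX => ?_⟩
  apply csSup_le (Set.range_nonempty _)
  rintro _ ⟨j, rfl⟩
  have h1 : hdim k B j (F.obj X) = hdim k B 0 (F.obj (X⟦j⟧)) := by
    refine Eq.trans ?_ (hdim_iso k B 0 ((F.commShiftIso j).app X)).symm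
    exact (congrArg (fun i => hdim k B i (F.obj X)) (add_zero j).symm).trans
      (hdim_shift k B j 0 (F.obj X)).symm
  have h2 := hN (X⟦j⟧) (hl k A X) fun i => by
    refine (rank_hom_le k A i _ (finCoh_shift k A j X hX.2)).trans ?_
    rw [hdim_shift]
    exact_mod_cast hdim_le_hl k A _ X hX.1
  have h3 := zero_bound k A B F T (X⟦j⟧) e _ h2
  dsimp only
  rw [h1]
  refine h3.trans (le_of_eq ?_)
  ring

end Main
end HLB

theorem hl_bound_of_derived_equivalence
    (A : Type u) [Ring A] [Algebra k A] [FiniteDimensional k A]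
    [HasDerivedCategory.{u} (ModuleCat.{u} A)]
    (B : Type u) [Ring B] [Algebra k B] [FiniteDimensional k B]
    [HasDerivedCategory.{u} (ModuleCat.{u} B)]
    (F : DerivedCategory (ModuleCat.{u} A) ⥤ DerivedCategory (ModuleCat.{u} B))
    [F.CommShift ℤ] [F.IsTriangulated] [F.IsEquivalence] :
    ∃ N₁ : ℕ, ∀ X : DerivedCategory (ModuleCat.{u} A), InDb k A X →
      hl k B (F.obj X) ≤ N₁ * hl k A X := by
  exact HLB.main k A B F
end

section
/- Let A and B be derived equivalent finite-dimensional algebras over an algebraically closed field. Then the global cohomological range of A is finite if and only if the global cohomological range of B is finite; likewise for global cohomological length and global cohomological width. -/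
/-!
STATEMENT 5: If `A` and `B` are derived equivalent finite-dimensional algebras over an
algebraically closed field, then `gl.hr A < ∞ ↔ gl.hr B < ∞`, and likewise for the
global cohomological length and the global cohomological width.
-/

open CategoryTheory Limits

universe u
variable (k : Type u) [Field k] [IsAlgClosed k]

section HomologyElements
set_option linter.unusedSectionVars false

variable {R : Type u} [Ring R] [HasDerivedCategory.{u} (ModuleCat.{u} R)]

/-- The map induced on `i`-th cohomology, as a linear map. -/
noncomputable def hm (i : ℤ) {X Y : DerivedCategory (ModuleCat.{u} R)} (f : X ⟶ Y) :
    (DerivedCategory.homologyFunctor (ModuleCat.{u} R) i).obj X →ₗ[R]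
      (DerivedCategory.homologyFunctor (ModuleCat.{u} R) i).obj Y :=
  ((DerivedCategory.homologyFunctor (ModuleCat.{u} R) i).map f).hom

lemma hm_comp (i : ℤ) {X Y Z : DerivedCategory (ModuleCat.{u} R)} (f : X ⟶ Y) (g : Y ⟶ Z)
    (x : (DerivedCategory.homologyFunctor (ModuleCat.{u} R) i).obj X) :
    hm i (f ≫ g) x = hm i g (hm i f x) := by
  simp [hm]

lemma hm_id (i : ℤ) {X : DerivedCategory (ModuleCat.{u} R)}
    (x : (DerivedCategory.homologyFunctor (ModuleCat.{u} R) i).obj X) :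
    hm i (𝟙 X) x = x := by
  simp [hm]

lemma hm_zero (i : ℤ) {X Y : DerivedCategory (ModuleCat.{u} R)}
    (x : (DerivedCategory.homologyFunctor (ModuleCat.{u} R) i).obj X) :
    hm i (0 : X ⟶ Y) x = 0 := by
  simp [hm]

lemma isIso_of_hm_bijective {X Y : DerivedCategory (ModuleCat.{u} R)} (f : X ⟶ Y)
    (h : ∀ i, Function.Bijective (hm i f)) : IsIso f := by
  rw [DerivedCategory.isIso_iff]
  intro n
  exact (ConcreteCategory.isIso_iff_bijective _).2 (h n)

lemma hm_bijective_of_isIso {X Y : DerivedCategory (ModuleCat.{u} R)} (f : X ⟶ Y) [IsIso f]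
    (i : ℤ) : Function.Bijective (hm i f) :=
  (ConcreteCategory.isIso_iff_bijective
    ((DerivedCategory.homologyFunctor (ModuleCat.{u} R) i).map f)).1 inferInstance

/-- `h` is the cohomology class of the cycle `x`. -/
def IsCls (L : CochainComplex (ModuleCat.{u} R) ℤ) (i : ℤ) (x : L.X i)
    (h : (DerivedCategory.homologyFunctor (ModuleCat.{u} R) i).obj (DerivedCategory.Q.obj L)) :
    Prop :=
  ∃ c : L.cycles i, L.iCycles i c = x ∧
    (DerivedCategory.homologyFunctorFactors (ModuleCat.{u} R) i).hom.app L h = L.homologyπ i c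

variable {L M : CochainComplex (ModuleCat.{u} R) ℤ} {i : ℤ}

lemma factors_inj (L : CochainComplex (ModuleCat.{u} R) ℤ) (i : ℤ) : Function.Bijective
    ((DerivedCategory.homologyFunctorFactors (ModuleCat.{u} R) i).hom.app L) :=
  (ConcreteCategory.isIso_iff_bijective _).1 inferInstance

lemma exists_cls (x : L.X i) (hx : L.d i (i+1) x = 0) : ∃ h, IsCls L i x h := by
  have hx' : (L.sc i).g x = 0 := by
    have key : ∀ j, i + 1 = j → L.d i j x = 0 := by rintro _ rfl; exact hx
    exact key ((ComplexShape.up ℤ).next i) (by simp)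
  obtain ⟨h, hh⟩ := (factors_inj L i).2
    (L.homologyπ i ((L.sc i).moduleCatCyclesIso.inv ⟨x, hx'⟩))
  refine ⟨h, _, ?_, hh⟩
  exact ConcreteCategory.congr_hom (L.sc i).moduleCatCyclesIso_inv_iCycles ⟨x, hx'⟩

lemma exists_rep (h : (DerivedCategory.homologyFunctor (ModuleCat.{u} R) i).obj
    (DerivedCategory.Q.obj L)) : ∃ x, IsCls L i x h := by
  obtain ⟨c, hc⟩ := (ModuleCat.epi_iff_surjective (L.homologyπ i)).1 inferInstance
    ((DerivedCategory.homologyFunctorFactors (ModuleCat.{u} R) i).hom.app L h)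
  exact ⟨_, c, rfl, hc.symm⟩

lemma IsCls.cycle {x : L.X i} {h} (H : IsCls L i x h) : L.d i (i+1) x = 0 := by
  obtain ⟨c, rfl, -⟩ := H
  exact ConcreteCategory.congr_hom (L.iCycles_d i (i+1)) c

lemma iCycles_inj : Function.Injective (L.iCycles i) :=
  (ModuleCat.mono_iff_injective _).1 inferInstance

lemma IsCls.zero_iff {x : L.X i} {h} (H : IsCls L i x h) :
    h = 0 ↔ ∃ z : L.X (i-1), L.d (i-1) i z = x := by
  obtain ⟨c, rfl, hc⟩ := H
  have ex := ShortComplex.exact_of_g_is_cokernel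
    (ShortComplex.mk _ _ (L.toCycles_comp_homologyπ (i-1) i))
    (L.homologyIsCokernel (i-1) i (by simp))
  rw [ShortComplex.moduleCat_exact_iff] at ex
  constructor
  · rintro rfl
    obtain ⟨z, hz⟩ := ex c (by rw [← hc]; exact map_zero _)
    refine ⟨z, ?_⟩
    rw [← hz]
    exact (ConcreteCategory.congr_hom (L.toCycles_i (i-1) i) z).symm
  · rintro ⟨z, hz⟩
    have : L.toCycles (i-1) i z = c := by
      apply iCycles_inj
      rw [← hz]
      exact (ConcreteCategory.congr_hom (L.toCycles_i (i-1) i) z)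
    apply (factors_inj L i).1
    rw [hc, ← this, map_zero]
    exact ConcreteCategory.congr_hom (L.toCycles_comp_homologyπ (i-1) i) z

lemma IsCls.map {x : L.X i} {h} (H : IsCls L i x h) (f : L ⟶ M) :
    IsCls M i (f.f i x) (hm i (DerivedCategory.Q.map f) h) := by
  obtain ⟨c, rfl, hc⟩ := H
  refine ⟨HomologicalComplex.cyclesMap f i c, ?_, ?_⟩
  · exact ConcreteCategory.congr_hom (HomologicalComplex.cyclesMap_i f i) c
  · have h1 := ConcreteCategory.congr_hom
      (DerivedCategory.homologyFunctorFactors_hom_naturality f i) h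
    refine h1.trans ?_
    have h2 := ConcreteCategory.congr_hom (HomologicalComplex.homologyπ_naturality f i) c
    refine Eq.trans ?_ h2
    exact congrArg (HomologicalComplex.homologyMap f i) hc

lemma IsCls.unique {x : L.X i} {h h'} (H : IsCls L i x h) (H' : IsCls L i x h') : h = h' := by
  obtain ⟨c, rfl, hc⟩ := H
  obtain ⟨c', h1, hc'⟩ := H'
  obtain rfl := iCycles_inj h1
  exact (factors_inj L i).1 (hc.trans hc'.symm)

lemma IsCls.add {x y : L.X i} {h h'} (H : IsCls L i x h) (H' : IsCls L i y h') :
    IsCls L i (x + y) (h + h') := by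
  obtain ⟨c, rfl, hc⟩ := H
  obtain ⟨c', rfl, hc'⟩ := H'
  exact ⟨c + c', map_add _ _ _, by rw [map_add, map_add, hc, hc']; rfl⟩

lemma IsCls.smul {x : L.X i} {h} (r : R) (H : IsCls L i x h) :
    IsCls L i (r • x) (r • h) := by
  obtain ⟨c, rfl, hc⟩ := H
  exact ⟨r • c, map_smul _ _ _, by rw [map_smul, map_smul, hc]; rfl⟩

lemma isCls_zero : IsCls L i 0 0 := ⟨0, map_zero _, by rw [map_zero, map_zero]; rfl⟩

lemma IsCls.sub {x y : L.X i} {h h'} (H : IsCls L i x h) (H' : IsCls L i y h') :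
    IsCls L i (x - y) (h - h') := by
  simpa [sub_eq_add_neg] using H.add (H'.smul (-1))

lemma IsCls.sum {ι : Type*} (s : Finset ι) {x : ι → L.X i} {h : ι → _}
    (H : ∀ j ∈ s, IsCls L i (x j) (h j)) : IsCls L i (∑ j ∈ s, x j) (∑ j ∈ s, h j) := by
  classical
  induction s using Finset.induction_on with
  | empty => simpa using isCls_zero
  | insert a s ha ih =>
    rw [Finset.sum_insert ha, Finset.sum_insert ha]
    exact (H a (by simp)).add (ih fun j hj => H j (by simp [hj]))

/-- elementwise criterion for `Q.map f` to be an isomorphism -/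
lemma isIso_Q_map_iff (f : L ⟶ M) : IsIso (DerivedCategory.Q.map f) ↔ ∀ i,
    (∀ x : L.X i, L.d i (i+1) x = 0 → (∃ z : M.X (i-1), M.d (i-1) i z = f.f i x) →
      ∃ z : L.X (i-1), L.d (i-1) i z = x) ∧
    (∀ y : M.X i, M.d i (i+1) y = 0 → ∃ x : L.X i, L.d i (i+1) x = 0 ∧
      ∃ z : M.X (i-1), M.d (i-1) i z = f.f i x - y) := by
  constructor
  · intro hf i
    have hb := hm_bijective_of_isIso (DerivedCategory.Q.map f) i
    refine ⟨fun x hx hz => ?_, fun y hy => ?_⟩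
    · obtain ⟨h, H⟩ := exists_cls x hx
      rw [← H.zero_iff]
      apply hb.1
      rw [map_zero, (H.map f).zero_iff]
      exact hz
    · obtain ⟨h, H⟩ := exists_cls y hy
      obtain ⟨h', rfl⟩ := hb.2 h
      obtain ⟨x, Hx⟩ := exists_rep h'
      refine ⟨x, Hx.cycle, ?_⟩
      rw [← ((Hx.map f).sub H).zero_iff, sub_self]
  · intro H
    apply isIso_of_hm_bijective
    intro i
    constructor
    · rw [injective_iff_map_eq_zero]
      intro h hh
      obtain ⟨x, Hx⟩ := exists_rep h
      rw [(Hx.map f).zero_iff] at hh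
      rw [Hx.zero_iff]
      exact (H i).1 x Hx.cycle hh
    · intro h
      obtain ⟨y, Hy⟩ := exists_rep h
      obtain ⟨x, hx, hz⟩ := (H i).2 y Hy.cycle
      obtain ⟨h', H'⟩ := exists_cls x hx
      rw [← ((H'.map f).sub Hy).zero_iff, sub_eq_zero] at hz
      exact ⟨h', hz⟩

end HomologyElements

section SumProd
set_option linter.unusedSectionVars false

variable {R : Type u} [Ring R] [HasDerivedCategory.{u} (ModuleCat.{u} R)]
variable {J : Type u}

/-- direct sum of a family of complexes -/
noncomputable def sumC (L : J → CochainComplex (ModuleCat.{u} R) ℤ) :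
    CochainComplex (ModuleCat.{u} R) ℤ where
  X i := ModuleCat.of R (Π₀ j, (L j).X i)
  d i i' := ModuleCat.ofHom (DFinsupp.mapRange.linearMap fun j => ((L j).d i i').hom)
  shape i i' h := by
    refine ModuleCat.hom_ext (LinearMap.ext fun x => DFinsupp.ext fun j => ?_)
    exact ConcreteCategory.congr_hom ((L j).shape i i' h) (x j)
  d_comp_d' i i' i'' _ _ := by
    refine ModuleCat.hom_ext (LinearMap.ext fun x => DFinsupp.ext fun j => ?_)
    exact ConcreteCategory.congr_hom ((L j).d_comp_d i i' i'') (x j)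

/-- product of a family of complexes -/
noncomputable def prodC (L : J → CochainComplex (ModuleCat.{u} R) ℤ) :
    CochainComplex (ModuleCat.{u} R) ℤ where
  X i := ModuleCat.of R (∀ j, (L j).X i)
  d i i' := ModuleCat.ofHom (LinearMap.pi fun j => ((L j).d i i').hom ∘ₗ LinearMap.proj j)
  shape i i' h := by
    refine ModuleCat.hom_ext (LinearMap.ext fun x => funext fun j => ?_)
    exact ConcreteCategory.congr_hom ((L j).shape i i' h) (x j)
  d_comp_d' i i' i'' _ _ := by
    refine ModuleCat.hom_ext (LinearMap.ext fun x => funext fun j => ?_)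
    exact ConcreteCategory.congr_hom ((L j).d_comp_d i i' i'') (x j)

variable {L L' : J → CochainComplex (ModuleCat.{u} R) ℤ}

/-- coordinates in a direct sum of complexes -/
def ev {i : ℤ} (x : (sumC L).X i) (j : J) : (L j).X i :=
  (show Π₀ j, (L j).X i from x) j

lemma ev_ext {i : ℤ} {x y : (sumC L).X i} (h : ∀ j, ev x j = ev y j) : x = y :=
  DFinsupp.ext h

lemma ev_zero {i : ℤ} (j : J) : ev (0 : (sumC L).X i) j = 0 := rfl

lemma ev_sub {i : ℤ} (x y : (sumC L).X i) (j : J) : ev (x - y) j = ev x j - ev y j :=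
  DFinsupp.sub_apply (β := fun j => (L j).X i) _ _ j

lemma sumC_d_apply (i i' : ℤ) (x : (sumC L).X i) (j : J) :
    ev ((sumC L).d i i' x) j = (L j).d i i' (ev x j) := rfl

open Classical in
/-- finitely supported elements of a direct sum of complexes -/
noncomputable def mkS (i : ℤ) (s : Finset J) (x : ∀ j, (L j).X i) : (sumC L).X i :=
  (DFinsupp.mk s fun j => x j : Π₀ j, (L j).X i)

open Classical in
lemma ev_mkS (i : ℤ) (s : Finset J) (x : ∀ j, (L j).X i) (j : J) :
    ev (mkS i s x) j = if j ∈ s then x j else 0 := by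
  simp only [ev, mkS]
  exact DFinsupp.mk_apply

lemma exists_supp {i : ℤ} (x : (sumC L).X i) : ∃ s : Finset J, ∀ j, j ∉ s → ev x j = 0 := by
  classical
  exact ⟨(show Π₀ j, (L j).X i from x).support, fun j hj => DFinsupp.notMem_support_iff.1 hj⟩

/-- maps of direct sums -/
noncomputable def sumCMap (s : ∀ j, L j ⟶ L' j) : sumC L ⟶ sumC L' where
  f i := ModuleCat.ofHom (DFinsupp.mapRange.linearMap fun j => ((s j).f i).hom)
  comm' i i' _ := by
    refine ModuleCat.hom_ext (LinearMap.ext fun x => DFinsupp.ext fun j => ?_)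
    exact ConcreteCategory.congr_hom ((s j).comm i i') (ev x j)

/-- maps of products -/
noncomputable def prodCMap (s : ∀ j, L j ⟶ L' j) : prodC L ⟶ prodC L' where
  f i := ModuleCat.ofHom (LinearMap.pi fun j => ((s j).f i).hom ∘ₗ LinearMap.proj j)
  comm' i i' _ := by
    refine ModuleCat.hom_ext (LinearMap.ext fun x => funext fun j => ?_)
    exact ConcreteCategory.congr_hom ((s j).comm i i') (x j)

lemma sumCMap_apply (s : ∀ j, L j ⟶ L' j) (i : ℤ) (x : (sumC L).X i) (j : J) :
    ev ((sumCMap s).f i x) j = (s j).f i (ev x j) := rfl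

open Classical in
/-- inclusions -/
noncomputable def sumCι (L : J → CochainComplex (ModuleCat.{u} R) ℤ) (j : J) : L j ⟶ sumC L where
  f i := ModuleCat.ofHom (DFinsupp.lsingle (R := R) (M := fun j => (L j).X i) j)
  comm' i i' _ := by
    refine ModuleCat.hom_ext (LinearMap.ext fun x => ?_)
    exact DFinsupp.mapRange_single (f := fun j => ((L j).d i i').hom) (hf := fun _ => map_zero _)

/-- projections -/
noncomputable def prodCπ (L : J → CochainComplex (ModuleCat.{u} R) ℤ) (j : J) : prodC L ⟶ L j where
  f i := ModuleCat.ofHom (LinearMap.proj (R := R) (φ := fun j => (L j).X i) j)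
  comm' i i' _ := by
    ext x
    rfl

open Classical in
/-- descending from a direct sum -/
noncomputable def sumCDesc {M : CochainComplex (ModuleCat.{u} R) ℤ} (g : ∀ j, L j ⟶ M) :
    sumC L ⟶ M where
  f i := ModuleCat.ofHom (DFinsupp.lsum ℕ (M := fun j => (L j).X i) fun j => ((g j).f i).hom)
  comm' i i' _ := by
    apply ModuleCat.hom_ext
    apply DFinsupp.lhom_ext
    intro j x
    have := ConcreteCategory.congr_hom ((g j).comm i i') x
    have h1 := DFinsupp.lsum_single ℕ (M := fun j => (L j).X i) (fun j => ((g j).f i).hom) j x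
    have h2 := DFinsupp.lsum_single ℕ (M := fun j => (L j).X i') (fun j => ((g j).f i').hom) j
      (((L j).d i i').hom x)
    have h3 : DFinsupp.mapRange (fun j => ((L j).d i i').hom) (fun _ => map_zero _)
      (DFinsupp.single j x) = DFinsupp.single j (((L j).d i i').hom x) :=
        DFinsupp.mapRange_single
    exact (congrArg (M.d i i').hom h1).trans (this.trans (h2.symm.trans
      (congrArg (DFinsupp.lsum ℕ (M := fun j => (L j).X i') fun j => ((g j).f i').hom) h3.symm)))

/-- lifting to a product -/
noncomputable def prodCLift {M : CochainComplex (ModuleCat.{u} R) ℤ} (g : ∀ j, M ⟶ L j) :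
    M ⟶ prodC L where
  f i := ModuleCat.ofHom (LinearMap.pi fun j => ((g j).f i).hom)
  comm' i i' _ := by
    refine ModuleCat.hom_ext (LinearMap.ext fun x => funext fun j => ?_)
    exact ConcreteCategory.congr_hom ((g j).comm i i') x

lemma sumCι_desc {M : CochainComplex (ModuleCat.{u} R) ℤ} (g : ∀ j, L j ⟶ M) (j : J) :
    sumCι L j ≫ sumCDesc g = g j := by
  classical
  refine HomologicalComplex.hom_ext _ _ fun i => ModuleCat.hom_ext (LinearMap.ext fun x => ?_)
  exact DFinsupp.lsum_single ℕ (M := fun j => (L j).X i) (fun j => ((g j).f i).hom) j x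

lemma prodCLift_π {M : CochainComplex (ModuleCat.{u} R) ℤ} (g : ∀ j, M ⟶ L j) (j : J) :
    prodCLift g ≫ prodCπ L j = g j := by
  refine HomologicalComplex.hom_ext _ _ fun i => ModuleCat.hom_ext (LinearMap.ext fun x => ?_)
  rfl

lemma sumCι_map (s : ∀ j, L j ⟶ L' j) (j : J) :
    sumCι L j ≫ sumCMap s = s j ≫ sumCι L' j := by
  classical
  refine HomologicalComplex.hom_ext _ _ fun i => ModuleCat.hom_ext (LinearMap.ext fun x => ?_)
  exact DFinsupp.mapRange_single (f := fun j => ((s j).f i).hom) (hf := fun _ => map_zero _)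

lemma prodCMap_π (s : ∀ j, L j ⟶ L' j) (j : J) :
    prodCMap s ≫ prodCπ L' j = prodCπ L j ≫ s j := by
  refine HomologicalComplex.hom_ext _ _ fun i => ModuleCat.hom_ext (LinearMap.ext fun x => ?_)
  rfl

lemma sum_sumCι {i : ℤ} (x : (sumC L).X i) : ∃ s : Finset J,
    (∑ j ∈ s, (sumCι L j).f i (ev x j) : (sumC L).X i) = x := by
  classical
  exact ⟨_, DFinsupp.sum_single (f := (show Π₀ j, (L j).X i from x))⟩

lemma isIso_Q_prodCMap (s : ∀ j, L j ⟶ L' j) (hs : ∀ j, IsIso (DerivedCategory.Q.map (s j))) :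
    IsIso (DerivedCategory.Q.map (prodCMap s)) := by
  simp only [isIso_Q_map_iff] at hs ⊢
  intro i
  constructor
  · rintro x hx ⟨z, hz⟩
    have h1 : ∀ j, (L j).d i (i+1) (x j) = 0 := fun j => congrFun hx j
    have h2 : ∀ j, ∃ z : (L' j).X (i-1), (L' j).d (i-1) i z = (s j).f i (x j) :=
      fun j => ⟨z j, congrFun hz j⟩
    choose w hw using fun j => (hs j i).1 (x j) (h1 j) (h2 j)
    exact ⟨w, funext hw⟩
  · intro y hy
    have h1 : ∀ j, (L' j).d i (i+1) (y j) = 0 := fun j => congrFun hy j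
    choose x hx z hz using fun j => (hs j i).2 (y j) (h1 j)
    exact ⟨x, funext hx, z, funext hz⟩

lemma isIso_Q_sumCMap (s : ∀ j, L j ⟶ L' j) (hs : ∀ j, IsIso (DerivedCategory.Q.map (s j))) :
    IsIso (DerivedCategory.Q.map (sumCMap s)) := by
  classical
  simp only [isIso_Q_map_iff] at hs ⊢
  intro i
  constructor
  · rintro x hx ⟨z, hz⟩
    have h1 : ∀ j, (L j).d i (i+1) (ev x j) = 0 := fun j => by
      rw [← sumC_d_apply, hx, ev_zero]
    have h2 : ∀ j, ∃ z : (L' j).X (i-1), (L' j).d (i-1) i z = (s j).f i (ev x j) :=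
      fun j => ⟨ev z j, by rw [← sumC_d_apply, hz, ← sumCMap_apply]⟩
    choose w hw using fun j => (hs j i).1 (ev x j) (h1 j) (h2 j)
    obtain ⟨S, hS⟩ := exists_supp x
    refine ⟨mkS _ S w, ev_ext fun j => ?_⟩
    rw [sumC_d_apply, ev_mkS]
    split_ifs with hj
    · exact hw j
    · rw [map_zero, hS j hj]
  · intro y hy
    have h1 : ∀ j, (L' j).d i (i+1) (ev y j) = 0 := fun j => by
      rw [← sumC_d_apply, hy, ev_zero]
    choose x hx z hz using fun j => (hs j i).2 (ev y j) (h1 j)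
    obtain ⟨S, hS⟩ := exists_supp y
    refine ⟨mkS _ S x, ev_ext fun j => ?_, mkS _ S z, ev_ext fun j => ?_⟩
    · rw [sumC_d_apply, ev_mkS, ev_zero]
      split_ifs with hj
      · exact hx j
      · rw [map_zero]
    · rw [sumC_d_apply, ev_mkS, ev_sub, sumCMap_apply, ev_mkS]
      split_ifs with hj
      · exact hz j
      · rw [map_zero, hS j hj, map_zero, sub_zero]

/-- Existence of coproducts in the derived category (weak form). -/
lemma exists_coprod (X : J → DerivedCategory (ModuleCat.{u} R)) :
    ∃ (Y : DerivedCategory (ModuleCat.{u} R)) (ι : ∀ j, X j ⟶ Y),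
      (∀ (Z : DerivedCategory (ModuleCat.{u} R)) (φ : ∀ j, X j ⟶ Z), ∃ ψ : Y ⟶ Z,
        ∀ j, ι j ≫ ψ = φ j) ∧
      ∀ i (y : (DerivedCategory.homologyFunctor (ModuleCat.{u} R) i).obj Y),
        ∃ (s : Finset J) (w : ∀ j, (DerivedCategory.homologyFunctor (ModuleCat.{u} R) i).obj (X j)),
          y = ∑ j ∈ s, hm i (ι j) (w j) := by
  classical
  let L : J → CochainComplex (ModuleCat.{u} R) ℤ := fun j => DerivedCategory.Q.objPreimage (X j)
  let e : ∀ j, DerivedCategory.Q.obj (L j) ≅ X j := fun j => DerivedCategory.Q.objObjPreimageIso _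
  refine ⟨DerivedCategory.Q.obj (sumC L), fun j => (e j).inv ≫ DerivedCategory.Q.map (sumCι L j),
    fun Z φ => ?_, fun i y => ?_⟩
  · let M := DerivedCategory.Q.objPreimage Z
    let eM : DerivedCategory.Q.obj M ≅ Z := DerivedCategory.Q.objObjPreimageIso _
    choose L' s hs g hg using fun j => DerivedCategory.right_fac ((e j).hom ≫ φ j ≫ eM.inv)
    have := isIso_Q_sumCMap s hs
    refine ⟨inv (DerivedCategory.Q.map (sumCMap s)) ≫ DerivedCategory.Q.map (sumCDesc g) ≫ eM.hom,
      fun j => ?_⟩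
    have h1 : DerivedCategory.Q.map (sumCι L j) ≫ inv (DerivedCategory.Q.map (sumCMap s)) =
        inv (DerivedCategory.Q.map (s j)) ≫ DerivedCategory.Q.map (sumCι L' j) := by
      rw [IsIso.comp_inv_eq, Category.assoc, IsIso.eq_inv_comp, ← Functor.map_comp,
        ← Functor.map_comp, sumCι_map]
    have h2 : DerivedCategory.Q.map (sumCι L' j) ≫ DerivedCategory.Q.map (sumCDesc g) =
      DerivedCategory.Q.map (g j) := by rw [← Functor.map_comp, sumCι_desc]
    rw [Category.assoc, reassoc_of% h1, reassoc_of% h2, Iso.inv_comp_eq,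
      ← reassoc_of% (hg j), Iso.inv_hom_id, Category.comp_id]
  · obtain ⟨x, Hx⟩ := exists_rep y
    have hc : ∀ j, (L j).d i (i+1) (ev x j) = 0 := fun j => by
      rw [← sumC_d_apply, Hx.cycle, ev_zero]
    choose h H using fun j => exists_cls (ev x j) (hc j)
    obtain ⟨S, hS⟩ := sum_sumCι x
    refine ⟨S, fun j => hm i (e j).hom (h j), ?_⟩
    have h1 : ∀ j, hm i ((e j).inv ≫ DerivedCategory.Q.map (sumCι L j)) (hm i (e j).hom (h j)) =
        hm i (DerivedCategory.Q.map (sumCι L j)) (h j) := by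
      intro j
      rw [← hm_comp, Iso.hom_inv_id_assoc]
    simp only [h1]
    have h2 := IsCls.sum S (fun j _ => (H j).map (sumCι L j))
    rw [hS] at h2
    exact Hx.unique h2

/-- Existence of products in the derived category (weak form). -/
lemma exists_prod (X : J → DerivedCategory (ModuleCat.{u} R)) :
    ∃ (Y : DerivedCategory (ModuleCat.{u} R)) (π : ∀ j, Y ⟶ X j),
      (∀ (Z : DerivedCategory (ModuleCat.{u} R)) (φ : ∀ j, Z ⟶ X j), ∃ ψ : Z ⟶ Y,
        ∀ j, ψ ≫ π j = φ j) ∧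
      ∀ i (y : (DerivedCategory.homologyFunctor (ModuleCat.{u} R) i).obj Y),
        (∀ j, hm i (π j) y = 0) → y = 0 := by
  let L : J → CochainComplex (ModuleCat.{u} R) ℤ := fun j => DerivedCategory.Q.objPreimage (X j)
  let e : ∀ j, DerivedCategory.Q.obj (L j) ≅ X j := fun j => DerivedCategory.Q.objObjPreimageIso _
  refine ⟨DerivedCategory.Q.obj (prodC L), fun j => DerivedCategory.Q.map (prodCπ L j) ≫ (e j).hom,
    fun Z φ => ?_, fun i y hy => ?_⟩
  · let M := DerivedCategory.Q.objPreimage Z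
    let eM : DerivedCategory.Q.obj M ≅ Z := DerivedCategory.Q.objObjPreimageIso _
    choose L' g s hs hg using fun j => DerivedCategory.left_fac (eM.hom ≫ φ j ≫ (e j).inv)
    have := isIso_Q_prodCMap s hs
    refine ⟨eM.inv ≫ DerivedCategory.Q.map (prodCLift g) ≫ inv (DerivedCategory.Q.map (prodCMap s)),
      fun j => ?_⟩
    have h1 : inv (DerivedCategory.Q.map (prodCMap s)) ≫ DerivedCategory.Q.map (prodCπ L j) =
        DerivedCategory.Q.map (prodCπ L' j) ≫ inv (DerivedCategory.Q.map (s j)) := by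
      rw [IsIso.inv_comp_eq, ← Category.assoc, IsIso.eq_comp_inv, ← Functor.map_comp,
        ← Functor.map_comp, prodCMap_π]
    have h2 : DerivedCategory.Q.map (prodCLift g) ≫ DerivedCategory.Q.map (prodCπ L' j) =
      DerivedCategory.Q.map (g j) := by rw [← Functor.map_comp, prodCLift_π]
    simp only [Category.assoc]
    rw [reassoc_of% h1, reassoc_of% h2, Iso.inv_comp_eq, ← Category.assoc, ← hg j]
    simp
  · obtain ⟨x, Hx⟩ := exists_rep y
    rw [Hx.zero_iff]
    have h1 : ∀ j, ∃ z : (L j).X (i-1), (L j).d (i-1) i z = (prodCπ L j).f i x := by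
      intro j
      rw [← (Hx.map (prodCπ L j)).zero_iff]
      apply (hm_bijective_of_isIso (e j).hom i).1
      rw [← hm_comp, hy, map_zero]
    choose z hz using h1
    exact ⟨z, funext hz⟩

/-- A generator of the derived category representing `H^0`. -/
lemma exists_gen (R : Type u) [Ring R] [HasDerivedCategory.{u} (ModuleCat.{u} R)] :
    ∃ (P : DerivedCategory (ModuleCat.{u} R))
      (e : (DerivedCategory.homologyFunctor (ModuleCat.{u} R) 0).obj P),
      (∀ y : (DerivedCategory.homologyFunctor (ModuleCat.{u} R) 0).obj P, ∃ r : R, y = r • e) ∧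
      ∀ (Y : DerivedCategory (ModuleCat.{u} R))
        (y : (DerivedCategory.homologyFunctor (ModuleCat.{u} R) 0).obj Y),
        ∃ f : P ⟶ Y, hm 0 f e = y := by
  let K : CochainComplex (ModuleCat.{u} R) ℤ :=
    (HomologicalComplex.single (ModuleCat.{u} R) (ComplexShape.up ℤ) 0).obj (ModuleCat.of R R)
  let θ : K.X 0 ≅ ModuleCat.of R R := HomologicalComplex.singleObjXSelf (ComplexShape.up ℤ) 0 _
  have hK : ∀ x, K.d 0 (0+1) x = 0 := by
    intro x
    have : K.d 0 (0+1) = 0 := by simp [K]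
    rw [this]; rfl
  obtain ⟨e, he⟩ := exists_cls (L := K) (i := 0) (θ.inv (1 : R)) (hK _)
  refine ⟨DerivedCategory.Q.obj K, e, fun y => ?_, fun Y y => ?_⟩
  · obtain ⟨x, Hx⟩ := exists_rep y
    refine ⟨(θ.hom x : R), Hx.unique ?_⟩
    convert he.smul (θ.hom x : R) using 1
    rw [← map_smul]
    have : x = θ.inv (θ.hom x) := by simp
    conv_lhs => rw [this]
    congr 1
    exact (mul_one (θ.hom x : R)).symm
  · let M := DerivedCategory.Q.objPreimage Y
    let eM : DerivedCategory.Q.obj M ≅ Y := DerivedCategory.Q.objObjPreimageIso _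
    obtain ⟨x, Hx⟩ := exists_rep (L := M) (hm 0 eM.inv y)
    let φ : ModuleCat.of R R ⟶ M.X 0 := ModuleCat.ofHom (LinearMap.toSpanSingleton R _ x)
    have hφ : ∀ j, (ComplexShape.up ℤ).Rel 0 j → φ ≫ M.d 0 j = 0 := by
      rintro j rfl
      ext
      have := Hx.cycle
      simpa [φ] using this
    let f : K ⟶ M := HomologicalComplex.mkHomFromSingle φ hφ
    refine ⟨DerivedCategory.Q.map f ≫ eM.hom, ?_⟩
    have h1 : hm 0 (DerivedCategory.Q.map f) e = hm 0 eM.inv y := by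
      refine (he.map f).unique ?_
      convert Hx using 1
      have : f.f 0 = θ.hom ≫ φ := HomologicalComplex.mkHomFromSingle_f φ hφ
      rw [this]
      simp [φ]
    rw [hm_comp, h1, ← hm_comp, Iso.inv_hom_id, hm_id]

end SumProd

section Transfer
set_option linter.unusedSectionVars false

/-- Unbounded derived category of modules. -/
abbrev DC (R : Type u) [Ring R] [HasDerivedCategory.{u} (ModuleCat.{u} R)] :=
  DerivedCategory (ModuleCat.{u} R)

/-- Cohomology. -/
noncomputable abbrev HH {R : Type u} [Ring R] [HasDerivedCategory.{u} (ModuleCat.{u} R)]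
    (i : ℤ) (X : DC R) : ModuleCat.{u} R :=
  (DerivedCategory.homologyFunctor (ModuleCat.{u} R) i).obj X

variable {R : Type u} [Ring R] [HasDerivedCategory.{u} (ModuleCat.{u} R)]

lemma hm_sum {X Y : DC R} (i : ℤ) (f : X ⟶ Y) {J : Type u} (s : Finset J) (w : J → HH i X) :
    hm i f (∑ j ∈ s, w j) = ∑ j ∈ s, hm i f (w j) := map_sum _ _ _

lemma coprod_uniq {J : Type u} {X : J → DC R} {Y : DC R} (ι : ∀ j, X j ⟶ Y)
    (h1 : ∀ (Z : DC R) (φ : ∀ j, X j ⟶ Z), ∃ ψ : Y ⟶ Z, ∀ j, ι j ≫ ψ = φ j)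
    (h2 : ∀ i (y : HH i Y), ∃ (s : Finset J) (w : ∀ j, HH i (X j)),
      y = ∑ j ∈ s, hm i (ι j) (w j)) {Z : DC R} (f g : Y ⟶ Z) (h : ∀ j, ι j ≫ f = ι j ≫ g) :
    f = g := by
  rw [← sub_eq_zero]
  obtain ⟨W, w, t, hT⟩ := Pretriangulated.distinguished_cocone_triangle₁ (f - g)
  have h3 : ∀ j, ∃ u : X j ⟶ W, ι j = u ≫ w := fun j =>
    Pretriangulated.Triangle.coyoneda_exact₂ _ hT (ι j) (by
      change ι j ≫ (f - g) = 0
      rw [Preadditive.comp_sub, h, sub_self])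
  choose u hu using h3
  obtain ⟨ψ, hψ⟩ := h1 W u
  have h4 : ∀ i (y : HH i Y), hm i (ψ ≫ w) y = y := by
    intro i y
    obtain ⟨s, v, rfl⟩ := h2 i y
    rw [hm_sum]
    refine Finset.sum_congr rfl fun j _ => ?_
    rw [← hm_comp, reassoc_of% (hψ j), ← hu]
  have h5 : IsIso (ψ ≫ w) := isIso_of_hm_bijective _ fun i => by
    rw [show ⇑(hm i (ψ ≫ w)) = id from funext (h4 i)]
    exact Function.bijective_id
  have h6 : w ≫ (f - g) = 0 := Pretriangulated.comp_distTriang_mor_zero₁₂ _ hT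
  rw [← cancel_epi (ψ ≫ w), Category.assoc, h6, comp_zero, comp_zero]

variable {A : Type u} [Ring A] [HasDerivedCategory.{u} (ModuleCat.{u} A)]
  {B : Type u} [Ring B] [HasDerivedCategory.{u} (ModuleCat.{u} B)]
  (F : DC A ⥤ DC B) [F.IsEquivalence]

lemma coprod_span {J : Type u} {X : J → DC A} {Y : DC A} (ι : ∀ j, X j ⟶ Y)
    (h1 : ∀ (Z : DC A) (φ : ∀ j, X j ⟶ Z), ∃ ψ : Y ⟶ Z, ∀ j, ι j ≫ ψ = φ j)
    (h2 : ∀ i (y : HH i Y), ∃ (s : Finset J) (w : ∀ j, HH i (X j)),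
      y = ∑ j ∈ s, hm i (ι j) (w j)) (i : ℤ) (y : HH i (F.obj Y)) :
    ∃ (s : Finset J) (w : ∀ j, HH i (F.obj (X j))), y = ∑ j ∈ s, hm i (F.map (ι j)) (w j) := by
  obtain ⟨Y', ι', h1', h2'⟩ := exists_coprod (fun j => F.obj (X j))
  obtain ⟨β, hβ⟩ := h1' (F.obj Y) (fun j => F.map (ι j))
  let ε : F.obj (F.objPreimage Y') ≅ Y' := F.objObjPreimageIso Y'
  obtain ⟨α, hα⟩ := h1 (F.objPreimage Y') (fun j => F.preimage (ι' j ≫ ε.inv))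
  have h3 : α ≫ F.preimage (ε.hom ≫ β) = 𝟙 Y := by
    refine coprod_uniq ι h1 h2 _ _ fun j => F.map_injective ?_
    rw [reassoc_of% (hα j)]
    simp [hβ]
  have h4 : (F.map α ≫ ε.hom) ≫ β = 𝟙 _ := by
    have := congrArg F.map h3
    simpa using this
  obtain ⟨s, w, hw⟩ := h2' i (hm i (F.map α ≫ ε.hom) y)
  refine ⟨s, w, ?_⟩
  have h5 : y = hm i β (hm i (F.map α ≫ ε.hom) y) := by rw [← hm_comp, h4, hm_id]
  rw [h5, hw, hm_sum]
  refine Finset.sum_congr rfl fun j _ => ?_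
  rw [← hm_comp, hβ]

lemma key_matrix {I J : Type u} (X : I → DC A) (Y : J → DC A) (a : ∀ j i, Y j ⟶ X i)
    (hs : ∀ m (x : ∀ i, HH m (X i)), ∃ (s : Finset J) (y : ∀ j, HH m (Y j)),
      ∀ i, x i = ∑ j ∈ s, hm m (a j i) (y j))
    (hi : ∀ m (s : Finset J) (y : ∀ j, HH m (Y j)),
      (∀ i, ∑ j ∈ s, hm m (a j i) (y j) = 0) → ∀ j ∈ s, y j = 0)
    (x : ∀ i, HH 0 (F.obj (X i))) :
    ∃ (s : Finset J) (w : ∀ j, HH 0 (F.obj (Y j))),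
      ∀ i, x i = ∑ j ∈ s, hm 0 (F.map (a j i)) (w j) := by
  obtain ⟨C, ι, hC, hCs⟩ := exists_coprod Y
  obtain ⟨P', π, hP, hPi⟩ := exists_prod X
  choose b hb using fun j => hP (Y j) (fun i => a j i)
  obtain ⟨c, hc⟩ := hC P' b
  have hca : ∀ j i, ι j ≫ c ≫ π i = a j i := fun j i => by rw [reassoc_of% (hc j), hb]
  have hπ : ∀ m (s : Finset J) (w : ∀ j, HH m (Y j)) i,
      hm m (π i) (hm m c (∑ j ∈ s, hm m (ι j) (w j))) = ∑ j ∈ s, hm m (a j i) (w j) := by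
    intro m s w i
    rw [hm_sum, hm_sum]
    refine Finset.sum_congr rfl fun j _ => ?_
    rw [← hm_comp, ← hm_comp, ← hca]
  have hiso : IsIso c := by
    refine isIso_of_hm_bijective _ fun m => ⟨?_, fun y => ?_⟩
    · rw [injective_iff_map_eq_zero]
      intro y hy
      obtain ⟨s, w, rfl⟩ := hCs m y
      have := hi m s w fun i => by rw [← hπ, hy, map_zero]
      exact Finset.sum_eq_zero fun j hj => by rw [this j hj, map_zero]
    · obtain ⟨s, w, hw⟩ := hs m fun i => hm m (π i) y
      refine ⟨∑ j ∈ s, hm m (ι j) (w j), ?_⟩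
      rw [← sub_eq_zero]
      refine hPi m _ fun i => ?_
      rw [map_sub, hπ, hw, sub_self]
  obtain ⟨P, e, -, he⟩ := exists_gen B
  choose f hf using fun i => he _ (x i)
  let ε : F.obj (F.objPreimage P) ≅ P := F.objObjPreimageIso P
  obtain ⟨g, hg⟩ := hP (F.objPreimage P) (fun i => F.preimage (ε.hom ≫ f i))
  obtain ⟨s, w, hw⟩ := coprod_span F ι hC hCs 0 (hm 0 (F.map (g ≫ inv c)) (hm 0 ε.inv e))
  refine ⟨s, w, fun i => ?_⟩
  have h1 : ε.inv ≫ F.map (g ≫ inv c) ≫ F.map (c ≫ π i) = f i := by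
    rw [← F.map_comp, Category.assoc, IsIso.inv_hom_id_assoc, hg]
    simp
  rw [← hf i, ← h1, hm_comp, hm_comp, hw, hm_sum]
  refine Finset.sum_congr rfl fun j _ => ?_
  rw [← hm_comp, ← F.map_comp, hca]

end Transfer

section LinAlg
set_option linter.unusedSectionVars false

lemma lin_alg_surj {k : Type u} [Field k] {V : Type u} [AddCommGroup V] [Module k V]
    [FiniteDimensional k V] {I J : Type u} (b : Module.Basis J k (I → k)) (x : I → V) :
    ∃ (s : Finset J) (y : J → V), ∀ i, x i = ∑ j ∈ s, b j i • y j := by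
  classical
  let v := Module.finBasis k V
  let ξ : Fin (Module.finrank k V) → I → k := fun l i => v.repr (x i) l
  let s : Finset J := Finset.univ.biUnion fun l => (b.repr (ξ l)).support
  refine ⟨s, fun j => ∑ l, b.repr (ξ l) j • v l, fun i => ?_⟩
  have h1 : ∀ l, ξ l i = ∑ j ∈ s, b.repr (ξ l) j * b j i := by
    intro l
    conv_lhs => rw [← b.linearCombination_repr (ξ l)]
    rw [Finsupp.linearCombination_apply, Finsupp.sum_of_support_subset (s := s)]
    · simp
    · exact Finset.subset_biUnion_of_mem (fun l => (b.repr (ξ l)).support) (Finset.mem_univ l)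
    · simp
  calc x i = ∑ l, ξ l i • v l := (v.sum_repr (x i)).symm
    _ = ∑ l, ∑ j ∈ s, (b.repr (ξ l) j * b j i) • v l := by
      refine Finset.sum_congr rfl fun l _ => ?_
      rw [h1, Finset.sum_smul]
    _ = _ := by
      rw [Finset.sum_comm]
      refine Finset.sum_congr rfl fun j _ => ?_
      rw [Finset.smul_sum]
      refine Finset.sum_congr rfl fun l _ => ?_
      rw [smul_smul, mul_comm]

lemma lin_alg_inj {k : Type u} [Field k] {V : Type u} [AddCommGroup V] [Module k V]
    {I J : Type u} (b : Module.Basis J k (I → k)) (s : Finset J)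
    (y : J → V) (h : ∀ i, ∑ j ∈ s, b j i • y j = 0) : ∀ j ∈ s, y j = 0 := by
  let v := Module.Basis.ofVectorSpace k V
  intro j hj
  apply v.repr.injective
  ext l
  have h1 : ∑ j ∈ s, v.repr (y j) l • b j = 0 := by
    funext i
    have := congrArg (fun z => v.repr z l) (h i)
    simp only [map_sum, map_smul, Finsupp.coe_finsetSum, Finset.sum_apply, map_zero,
      Finsupp.coe_zero, Pi.zero_apply, Finsupp.smul_apply, smul_eq_mul] at this
    simp only [Finset.sum_apply, Pi.smul_apply, smul_eq_mul, Pi.zero_apply]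
    rw [← this]
    exact Finset.sum_congr rfl fun j _ => mul_comm _ _
  simpa using linearIndependent_iff'.1 b.linearIndependent s _ h1 j hj

end LinAlg

section Transfer2
set_option linter.unusedSectionVars false

lemma hm_add {R : Type u} [Ring R] [HasDerivedCategory.{u} (ModuleCat.{u} R)]
    {X Y : DC R} (i : ℤ) (f g : X ⟶ Y) (x : HH i X) : hm i (f + g) x = hm i f x + hm i g x := by
  simp [hm]

lemma hm_scalar {k : Type u} [Field k] {R : Type u} [Ring R] [Algebra k R]
    [HasDerivedCategory.{u} (ModuleCat.{u} R)] (i : ℤ) (c : k) (X : DC R) (x : HH i X) :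
    hm i (c • 𝟙 X) x = algebraMap k R c • x := by
  let M := DerivedCategory.Q.objPreimage X
  let e : DerivedCategory.Q.obj M ≅ X := DerivedCategory.Q.objObjPreimageIso _
  have h1 : ∀ y : HH i (DerivedCategory.Q.obj M),
      hm i (c • 𝟙 (DerivedCategory.Q.obj M)) y = algebraMap k R c • y := by
    intro y
    obtain ⟨z, Hz⟩ := exists_rep y
    have h2 := Hz.map (c • 𝟙 M)
    rw [Functor.map_smul, CategoryTheory.Functor.map_id] at h2
    refine h2.unique ?_
    exact Hz.smul (algebraMap k R c)
  have h2 : c • 𝟙 X = e.inv ≫ (c • 𝟙 (DerivedCategory.Q.obj M)) ≫ e.hom := by simp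
  rw [h2, hm_comp, hm_comp, h1, map_smul, ← hm_comp, e.inv_hom_id, hm_id]

variable {A : Type u} [Ring A] [HasDerivedCategory.{u} (ModuleCat.{u} A)]
  {B : Type u} [Ring B] [HasDerivedCategory.{u} (ModuleCat.{u} B)]
  (F : DC A ⥤ DC B) [F.IsEquivalence]

lemma F_scalar {k : Type u} [Field k] [Algebra k A] (c : k) (X : DC A) (y : HH 0 (F.obj X)) :
    ∃ z : B, hm 0 (F.map (c • 𝟙 X)) y = z • y := by
  obtain ⟨P, e, he1, he⟩ := exists_gen B
  obtain ⟨f, hf⟩ := he _ y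
  let ε : F.obj (F.objPreimage P) ≅ P := F.objObjPreimageIso P
  obtain ⟨z, hz⟩ := he1 (hm 0 (ε.inv ≫ F.map (c • 𝟙 _) ≫ ε.hom) e)
  refine ⟨z, ?_⟩
  rw [← hf, ← map_smul, ← hz, ← hm_comp, ← hm_comp]
  have h1 : (c • 𝟙 _) ≫ F.preimage (ε.hom ≫ f) = F.preimage (ε.hom ≫ f) ≫ (c • 𝟙 X) := by simp
  have h2 := congrArg (fun t => ε.inv ≫ F.map t) h1
  simp only [Functor.map_comp, Functor.map_preimage, Category.assoc, Iso.inv_hom_id_assoc] at h2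
  rw [← h2]
  simp

/-- Finite generation of the cohomology of `F X`. -/
lemma F_finite {k : Type u} [Field k] [Algebra k A] (X : DC A)
    (hX : ∀ i, FiniteDimensional k ((ModuleCat.restrictScalars (algebraMap k A)).obj (HH i X))) :
    Module.Finite B (HH 0 (F.obj X)) := by
  classical
  let I : Type u := HH 0 (F.obj X)
  let b := Module.Basis.ofVectorSpace k (I → k)
  obtain ⟨s, w, hw⟩ := key_matrix F (fun _ : I => X) (fun _ => X) (fun j i => b j i • 𝟙 X)
    (fun m x => by
      obtain ⟨s, y, hy⟩ := lin_alg_surj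
        (V := (ModuleCat.restrictScalars (algebraMap k A)).obj (HH m X)) b x
      refine ⟨s, y, fun i => (hy i).trans (Finset.sum_congr rfl fun j _ => ?_)⟩
      exact (hm_scalar m _ X (y j)).symm)
    (fun m s y h => by
      refine lin_alg_inj
        (V := (ModuleCat.restrictScalars (algebraMap k A)).obj (HH m X)) b s y fun i => ?_
      refine Eq.trans (Finset.sum_congr rfl fun j _ => ?_) (h i)
      exact (hm_scalar m _ X (y j)).symm)
    (fun i => i)
  refine ⟨⟨s.image w, ?_⟩⟩
  rw [eq_top_iff]
  rintro y -
  have h1 := hw y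
  rw [h1]
  refine Submodule.sum_mem _ fun j hj => ?_
  obtain ⟨z, hz⟩ := F_scalar F (b j y) X (w j)
  rw [hz]
  exact Submodule.smul_mem _ _ (Submodule.subset_span (Finset.mem_coe.2
    (Finset.mem_image_of_mem w hj)))

/-- Only finitely many members of a locally finite family have nonzero `H^0` after `F`. -/
lemma F_locally_finite [F.PreservesZeroMorphisms] {I : Type u} (X : I → DC A)
    (hX : ∀ m, ∃ s : Finset I, ∀ i, i ∉ s → Subsingleton (HH m (X i))) :
    ∃ s : Finset I, ∀ i, i ∉ s → Subsingleton (HH 0 (F.obj (X i))) := by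
  classical
  let a : ∀ j i, X j ⟶ X i := fun j i => if h : j = i then eqToHom (by rw [h]) else 0
  have ha : ∀ m (s : Finset I) (y : ∀ j, HH m (X j)) i, ∑ j ∈ s, hm m (a j i) (y j) =
      if i ∈ s then y i else 0 := by
    intro m s y i
    split_ifs with h
    · rw [Finset.sum_eq_single_of_mem i h]
      · simp [a, hm_id]
      · intro j _ hj
        simp [a, hj, hm_zero]
    · refine Finset.sum_eq_zero fun j hj => ?_
      have : j ≠ i := by rintro rfl; exact h hj
      simp [a, this, hm_zero]
  have hch : ∀ i, ∃ x : HH 0 (F.obj (X i)), x = 0 → Subsingleton (HH 0 (F.obj (X i))) := by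
    intro i
    by_cases h : Subsingleton (HH 0 (F.obj (X i)))
    · exact ⟨0, fun _ => h⟩
    · rw [not_subsingleton_iff_nontrivial] at h
      obtain ⟨x, hx⟩ := exists_ne (0 : HH 0 (F.obj (X i)))
      exact ⟨x, fun h => absurd h hx⟩
  choose x hx using hch
  obtain ⟨s, w, hw⟩ := key_matrix F X X a
    (fun m x => by
      obtain ⟨s, hs⟩ := hX m
      refine ⟨s, x, fun i => ?_⟩
      rw [ha]
      split_ifs with h
      · rfl
      · exact (hs i h).elim _ _)
    (fun m s y h j hj => by
      have := h j
      rwa [ha, if_pos hj] at this) x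
  refine ⟨s, fun i hi => hx i ?_⟩
  rw [hw i]
  refine Finset.sum_eq_zero fun j hj => ?_
  have : j ≠ i := by rintro rfl; exact hi hj
  simp [a, this, hm_zero]

end Transfer2

section Dims
set_option linter.unusedSectionVars false

variable (k : Type u) [Field k] {R : Type u} [Ring R] [Algebra k R]

/-- `dim_k M ≤ n`. -/
def Dle (M : ModuleCat.{u} R) (n : ℕ) : Prop :=
  Module.rank k ((ModuleCat.restrictScalars (algebraMap k R)).obj M) ≤ (n : Cardinal)

variable {k}

lemma Dle.finite {M : ModuleCat.{u} R} {n : ℕ} (h : Dle k M n) :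
    FiniteDimensional k ((ModuleCat.restrictScalars (algebraMap k R)).obj M) :=
  Module.rank_lt_aleph0_iff.1 (lt_of_le_of_lt h (Cardinal.natCast_lt_aleph0))

lemma Dle.finrank_le {M : ModuleCat.{u} R} {n : ℕ} (h : Dle k M n) :
    Module.finrank k ((ModuleCat.restrictScalars (algebraMap k R)).obj M) ≤ n :=
  Module.finrank_le_of_rank_le h

lemma dle_finrank {M : ModuleCat.{u} R}
    (h : FiniteDimensional k ((ModuleCat.restrictScalars (algebraMap k R)).obj M)) :
    Dle k M (Module.finrank k ((ModuleCat.restrictScalars (algebraMap k R)).obj M)) :=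
  (Module.finrank_eq_rank k ((ModuleCat.restrictScalars (algebraMap k R)).obj M)).symm.le

lemma Dle.mono {M : ModuleCat.{u} R} {n m : ℕ} (h : Dle k M n) (hnm : n ≤ m) : Dle k M m :=
  le_trans h (by exact_mod_cast hnm)

lemma Dle.of_injective {M N : ModuleCat.{u} R} {n : ℕ} (h : Dle k N n) (f : M ⟶ N)
    (hf : Function.Injective f) : Dle k M n :=
  (LinearMap.rank_le_of_injective
    ((ModuleCat.restrictScalars (algebraMap k R)).map f).hom hf).trans h

lemma Dle.of_surjective {M N : ModuleCat.{u} R} {n : ℕ} (h : Dle k M n) (f : M ⟶ N)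
    (hf : Function.Surjective f) : Dle k N n :=
  (LinearMap.rank_le_of_surjective
    ((ModuleCat.restrictScalars (algebraMap k R)).map f).hom hf).trans h

lemma Dle.of_iso {M N : ModuleCat.{u} R} {n : ℕ} (h : Dle k M n) (e : M ≅ N) : Dle k N n :=
  h.of_surjective e.hom ((ConcreteCategory.isIso_iff_bijective e.hom).1 inferInstance).2

lemma dle_of_subsingleton {M : ModuleCat.{u} R} (h : Subsingleton M) (n : ℕ) : Dle k M n := by
  have : Subsingleton ((ModuleCat.restrictScalars (algebraMap k R)).obj M) := h
  rw [Dle, rank_subsingleton']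
  exact zero_le

lemma Dle.subsingleton {M : ModuleCat.{u} R} (h : Dle k M 0) : Subsingleton M := by
  rw [Dle, Nat.cast_zero, nonpos_iff_eq_zero, rank_zero_iff] at h
  exact h

lemma Dle.exact {S : ShortComplex (ModuleCat.{u} R)} (hS : S.Exact) {a b : ℕ}
    (h1 : Dle k S.X₁ a) (h3 : Dle k S.X₃ b) : Dle k S.X₂ (a + b) := by
  rw [ShortComplex.moduleCat_exact_iff] at hS
  let f := ((ModuleCat.restrictScalars (algebraMap k R)).map S.f).hom
  let g := ((ModuleCat.restrictScalars (algebraMap k R)).map S.g).hom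
  have h4 : LinearMap.ker g ≤ LinearMap.range f := by
    intro x hx
    obtain ⟨y, hy⟩ := hS x hx
    exact ⟨y, hy⟩
  have h5 := LinearMap.rank_range_add_rank_ker g
  rw [Dle, ← h5, add_comm, Nat.cast_add]
  refine add_le_add ?_ ?_
  · exact ((Submodule.rank_mono h4).trans (LinearMap.rank_le_of_surjective f.rangeRestrict f.surjective_rangeRestrict)).trans h1
  · exact (Submodule.rank_le _).trans h3

lemma Dle.pred {M : ModuleCat.{u} R} {d : ℕ} (h : Dle k M d) (N : Submodule R M)
    (hN : Nontrivial (M ⧸ N)) : ∃ d', d = d' + 1 ∧ Dle k (ModuleCat.of R N) d' := by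
  have := h.finite
  let V := (ModuleCat.restrictScalars (algebraMap k R)).obj M
  let i := ((ModuleCat.restrictScalars (algebraMap k R)).map (ModuleCat.ofHom N.subtype)).hom
  have hi : Function.Injective i := N.injective_subtype
  have hN' : LinearMap.range i ≠ ⊤ := by
    intro h
    rw [LinearMap.range_eq_top] at h
    obtain ⟨x, y, hxy⟩ := hN
    refine hxy ?_
    have h2 : N = ⊤ := by
      rw [eq_top_iff]
      rintro z -
      obtain ⟨w, hw⟩ := h z
      rw [← hw]
      exact w.2
    subst h2
    exact Subsingleton.elim x y
  have h3 := Submodule.finrank_lt hN'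
  rw [LinearMap.finrank_range_of_inj hi] at h3
  have h4 := h3.trans_le h.finrank_le
  obtain ⟨d', rfl⟩ : ∃ d', d = d' + 1 := ⟨d - 1, by omega⟩
  refine ⟨d', rfl, ?_⟩
  have : FiniteDimensional k
      ((ModuleCat.restrictScalars (algebraMap k R)).obj (ModuleCat.of R N)) :=
    FiniteDimensional.of_injective i hi
  exact (dle_finrank this).mono (by omega)

lemma dle_of_finite [FiniteDimensional k R] (M : ModuleCat.{u} R) (h : Module.Finite R M) :
    ∃ n, Dle k M n := by
  let : Module k M := Module.compHom M (algebraMap k R)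
  have : IsScalarTower k R M := ⟨fun a b c => by
    rw [Algebra.smul_def, mul_smul]; rfl⟩
  have h1 : Module.Finite k M := Module.Finite.trans R M
  have h2 : FiniteDimensional k ((ModuleCat.restrictScalars (algebraMap k R)).obj M) := h1
  exact ⟨_, dle_finrank h2⟩

lemma isFiniteLength_of_dle [FiniteDimensional k R] (M : ModuleCat.{u} R) {n : ℕ}
    (h : Dle k M n) : IsFiniteLength R M := by
  let : Module k M := Module.compHom M (algebraMap k R)
  have : IsScalarTower k R M := ⟨fun a b c => by
    rw [Algebra.smul_def, mul_smul]; rfl⟩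
  have h2 : FiniteDimensional k M := h.finite
  rw [isFiniteLength_iff_isNoetherian_isArtinian]
  exact ⟨isNoetherian_of_tower k inferInstance, isArtinian_of_tower k inferInstance⟩

end Dims

section Bounds
open scoped ZeroObject
set_option linter.unusedSectionVars false

variable {k : Type u} [Field k]
  {A : Type u} [Ring A] [Algebra k A] [HasDerivedCategory.{u} (ModuleCat.{u} A)]
  {B : Type u} [Ring B] [Algebra k B]
  [HasDerivedCategory.{u} (ModuleCat.{u} B)]

/-- A module in degree `i`. -/
noncomputable abbrev sg (i : ℤ) (M : ModuleCat.{u} A) : DC A :=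
  (DerivedCategory.singleFunctor (ModuleCat.{u} A) i).obj M

lemma sg_zero (i j : ℤ) (h : i ≠ j) (M : ModuleCat.{u} A) : Subsingleton (HH j (sg i M)) := by
  rw [← ModuleCat.isZero_iff_subsingleton]
  rcases lt_or_gt_of_ne h with h | h
  · exact DerivedCategory.isZero_of_isLE _ i j h
  · exact DerivedCategory.isZero_of_isGE _ i j h

/-- cohomology of a module -/
noncomputable def sgIso (i : ℤ) (M : ModuleCat.{u} A) : HH i (sg i M) ≅ M :=
  (DerivedCategory.singleFunctorCompHomologyFunctorIso (ModuleCat.{u} A) i).app M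

/-- single functors and shifts -/
noncomputable def sgShift (i : ℤ) (M : ModuleCat.{u} A) : (sg 0 M)⟦-i⟧ ≅ sg i M :=
  ((DerivedCategory.singleFunctors (ModuleCat.{u} A)).shiftIso (-i) i 0 (by simp)).app M

lemma hm_isZero {X : DC A} (h : ∀ i, Subsingleton (HH i X)) : IsZero X := by
  have : IsIso (0 : X ⟶ (0 : DC A)) := isIso_of_hm_bijective _ fun i => by
    have h1 : Subsingleton (HH i (0 : DC A)) := by
      rw [← ModuleCat.isZero_iff_subsingleton]
      exact Functor.map_isZero _ (isZero_zero _)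
    have := h i
    exact ⟨fun x y _ => Subsingleton.elim _ _, fun y => ⟨0, Subsingleton.elim _ _⟩⟩
  exact (isZero_zero _).of_iso (asIso (0 : X ⟶ (0 : DC A)))

variable (F : DC A ⥤ DC B) [F.CommShift ℤ] [F.IsTriangulated]

lemma dle_F_triangle (T : Pretriangulated.Triangle (DC A))
    (hT : T ∈ Pretriangulated.distinguishedTriangles) {a b : ℕ}
    (h1 : Dle k (HH 0 (F.obj T.obj₁)) a) (h3 : Dle k (HH 0 (F.obj T.obj₃)) b) :
    Dle k (HH 0 (F.obj T.obj₂)) (a + b) :=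
  Dle.exact (DerivedCategory.HomologySequence.exact₂ _ (F.map_distinguished T hT) 0) h1 h3

lemma dle_F_iso {X Y : DC A} (e : X ≅ Y) {n : ℕ} (h : Dle k (HH 0 (F.obj X)) n) :
    Dle k (HH 0 (F.obj Y)) n :=
  h.of_iso ((DerivedCategory.homologyFunctor (ModuleCat.{u} B) 0).mapIso (F.mapIso e))

lemma dle_F_isZero {X : DC A} (h : IsZero X) (n : ℕ) : Dle k (HH 0 (F.obj X)) n := by
  refine dle_of_subsingleton ?_ n
  rw [← ModuleCat.isZero_iff_subsingleton]
  exact Functor.map_isZero _ (Functor.map_isZero _ h)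

lemma dle_F_ses {S : ShortComplex (ModuleCat.{u} A)} (hS : S.ShortExact) (i : ℤ) {a b : ℕ}
    (h1 : Dle k (HH 0 (F.obj (sg i S.X₁))) a) (h3 : Dle k (HH 0 (F.obj (sg i S.X₃))) b) :
    Dle k (HH 0 (F.obj (sg i S.X₂))) (a + b) := by
  have hT := Pretriangulated.Triangle.shift_distinguished _ hS.singleTriangle_distinguished (-i)
  refine dle_F_iso F (sgShift i _) (dle_F_triangle F _ hT ?_ ?_)
  · exact dle_F_iso F (sgShift i _).symm h1
  · exact dle_F_iso F (sgShift i _).symm h3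

lemma dle_F_quot (M : ModuleCat.{u} A) (N : Submodule A M) (i : ℤ) {a b : ℕ}
    (h1 : Dle k (HH 0 (F.obj (sg i (ModuleCat.of A N)))) a)
    (h3 : Dle k (HH 0 (F.obj (sg i (ModuleCat.of A (M ⧸ N))))) b) :
    Dle k (HH 0 (F.obj (sg i M))) (a + b) := by
  let S : ShortComplex (ModuleCat.{u} A) := ShortComplex.mk (ModuleCat.ofHom N.subtype)
    (ModuleCat.ofHom N.mkQ) (by ext x; simp)
  have hS : S.ShortExact := by
    refine ShortComplex.ShortExact.mk' ?_ ?_ ?_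
    · rw [ShortComplex.moduleCat_exact_iff]
      intro x hx
      exact ⟨⟨x, (Submodule.Quotient.mk_eq_zero N).1 hx⟩, rfl⟩
    · rw [ModuleCat.mono_iff_injective]
      exact N.injective_subtype
    · rw [ModuleCat.epi_iff_surjective]
      exact N.mkQ_surjective
  exact dle_F_ses F hS i h1 h3

lemma dle_F_bounded (C : ℤ → ℕ)
    (hC : ∀ (M : ModuleCat.{u} A) d, Dle k M d → ∀ i, Dle k (HH 0 (F.obj (sg i M))) (C i * d))
    (d : ℤ → ℕ) (n : ℕ) : ∀ (a : ℤ) (X : DC A), (∀ i, Dle k (HH i X) (d i)) →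
      (∀ i, i < a → Subsingleton (HH i X)) → (∀ i, a + n ≤ i → Subsingleton (HH i X)) →
      Dle k (HH 0 (F.obj X)) (∑ i ∈ Finset.Ico a (a + n), C i * d i) := by
  induction n with
  | zero =>
    intro a X _ h1 h2
    refine dle_F_isZero F (hm_isZero fun i => ?_) _
    by_cases hi : i < a
    · exact h1 i hi
    · exact h2 i (by simp; omega)
  | succ n ih =>
    intro a X hX h1 h2
    obtain ⟨X₁, X₃, hX₁, hX₃, f, g, h, hT⟩ :=
      DerivedCategory.TStructure.t.exists_triangle X a (a + 1) rfl
    have hX₁' : X₁.IsLE a := ⟨hX₁⟩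
    have hX₃' : X₃.IsGE (a + 1) := ⟨hX₃⟩
    rw [DerivedCategory.isLE_iff] at hX₁'
    rw [DerivedCategory.isGE_iff] at hX₃'
    simp only [ModuleCat.isZero_iff_subsingleton] at hX₁' hX₃'
    have d1 : ∀ i, Dle k (HH i X₁) (d i) := by
      intro i
      by_cases hi : a < i
      · exact dle_of_subsingleton (hX₁' i hi) _
      · have := Dle.exact (k := k)
          (DerivedCategory.HomologySequence.exact₁ _ hT (i-1) i (by simp))
          (dle_of_subsingleton (hX₃' (i-1) (by omega)) 0) (hX i)
        rwa [zero_add] at this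
    have d3 : ∀ i, Dle k (HH i X₃) (d i) := by
      intro i
      by_cases hi : i < a + 1
      · exact dle_of_subsingleton (hX₃' i hi) _
      · exact Dle.exact (k := k)
          (DerivedCategory.HomologySequence.exact₃ _ hT i (i+1) rfl) (hX i)
          (dle_of_subsingleton (hX₁' (i+1) (by omega)) 0)
    have z1 : ∀ i, i < a → Subsingleton (HH i X₁) := fun i hi =>
      Dle.subsingleton (k := k) (Dle.exact
          (DerivedCategory.HomologySequence.exact₁ _ hT (i-1) i (by simp))
          (dle_of_subsingleton (hX₃' (i-1) (by omega)) 0) (dle_of_subsingleton (h1 i hi) 0))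
    have z3 : ∀ i, a + 1 + n ≤ i → Subsingleton (HH i X₃) := fun i hi =>
      Dle.subsingleton (k := k) (Dle.exact
          (DerivedCategory.HomologySequence.exact₃ _ hT i (i+1) rfl)
          (dle_of_subsingleton (h2 i (by push_cast; omega)) 0)
          (dle_of_subsingleton (hX₁' (i+1) (by omega)) 0))
    have i1 := ih (a + 1) X₃ d3 hX₃' z3
    have hs : ∑ i ∈ Finset.Ico a (a + ((n + 1 : ℕ) : ℤ)), C i * d i =
        C a * d a + ∑ i ∈ Finset.Ico (a + 1) (a + 1 + n), C i * d i := by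
      rw [← Finset.sum_insert (f := fun i => C i * d i)
        (show a ∉ Finset.Ico (a + 1) (a + 1 + (n : ℤ)) by simp)]
      congr 1
      ext i
      simp only [Finset.mem_Ico, Finset.mem_insert]
      push_cast
      omega
    rw [hs]
    refine dle_F_triangle F _ hT ?_ i1
    have : X₁.IsLE a := ⟨hX₁⟩
    have : X₁.IsGE a := by
      rw [DerivedCategory.isGE_iff]
      intro i hi
      rw [ModuleCat.isZero_iff_subsingleton]
      exact z1 i hi
    obtain ⟨M, ⟨e⟩⟩ := DerivedCategory.exists_iso_singleFunctor_obj_of_isGE_of_isLE X₁ a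
    have hM : Dle k M (d a) := (d1 a).of_iso
      ((DerivedCategory.homologyFunctor (ModuleCat.{u} A) a).mapIso e ≪≫ sgIso a M)
    exact dle_F_iso F e.symm (hC M _ hM a)

end Bounds

section Bounds2
set_option linter.unusedSectionVars false

variable {k : Type u} [Field k]
  {A : Type u} [Ring A] [Algebra k A] [FiniteDimensional k A]
  [HasDerivedCategory.{u} (ModuleCat.{u} A)]
  {B : Type u} [Ring B] [Algebra k B] [FiniteDimensional k B]
  [HasDerivedCategory.{u} (ModuleCat.{u} B)]
  (F : DC A ⥤ DC B) [F.CommShift ℤ] [F.IsTriangulated] [F.IsEquivalence]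

lemma single_bound (M : ModuleCat.{u} A) {d : ℕ} (hM : Dle k M d) :
    ∃ C : ℤ →₀ ℕ, ∀ i, Dle k (HH 0 (F.obj (sg i M))) (C i) := by
  classical
  have h1 : ∀ i, ∃ n, Dle k (HH 0 (F.obj (sg i M))) n := by
    intro i
    refine dle_of_finite _ (F_finite (k := k) F _ fun j => Dle.finite (n := d) ?_)
    by_cases hij : i = j
    · subst hij
      exact hM.of_iso (sgIso i M).symm
    · exact dle_of_subsingleton (sg_zero i j hij M) _
  choose n hn using h1
  obtain ⟨s, hs⟩ := F_locally_finite F (fun i : ULift.{u} ℤ => sg i.down M) fun m =>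
    ⟨{ULift.up m}, fun i hi => sg_zero _ _ (fun h => hi (by simp [← h])) _⟩
  refine ⟨Finsupp.onFinset (s.image ULift.down) (fun i => if ULift.up i ∈ s then n i else 0)
    fun i hi => ?_, fun i => ?_⟩
  · simp only [ne_eq, ite_eq_right_iff, Classical.not_imp] at hi
    exact Finset.mem_image.2 ⟨_, hi.1, rfl⟩
  · rw [Finsupp.onFinset_apply]
    split_ifs with h
    · exact hn i
    · exact dle_of_subsingleton (hs _ h) _

lemma simple_bound_aux {M : Type u} [AddCommGroup M] [Module A M] (h : IsFiniteLength A M) :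
    ∃ C : ℤ →₀ ℕ, ∀ (S : ModuleCat.{u} A), IsSimpleModule A S → ∀ f : M →ₗ[A] S, f ≠ 0 →
      ∀ i, Dle k (HH 0 (F.obj (sg i S))) (C i) := by
  induction h with
  | of_subsingleton =>
    refine ⟨0, fun S _ f hf => absurd (LinearMap.ext fun x => ?_) hf⟩
    rw [Subsingleton.elim x 0, map_zero, map_zero]
  | @of_simple_quotient M _ _ N hN hl ih =>
    obtain ⟨C, hC⟩ := ih
    obtain ⟨d, hd⟩ := dle_of_finite (k := k) (ModuleCat.of A (M ⧸ N))
      (inferInstanceAs (Module.Finite A (M ⧸ N)))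
    obtain ⟨C', hC'⟩ := single_bound F (ModuleCat.of A (M ⧸ N)) hd
    refine ⟨C + C', fun S hS f hf i => ?_⟩
    by_cases h0 : f ∘ₗ N.subtype = 0
    · let g : (M ⧸ N) →ₗ[A] S := N.liftQ f (by
        intro x hx
        exact LinearMap.congr_fun h0 ⟨x, hx⟩)
      have hg : g ≠ 0 := by
        intro h
        refine hf (LinearMap.ext fun x => ?_)
        exact LinearMap.congr_fun h (Submodule.Quotient.mk x)
      have hb := LinearMap.bijective_of_ne_zero hg
      let e : ModuleCat.of A (M ⧸ N) ≅ S := (LinearEquiv.ofBijective g hb).toModuleIso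
      refine (dle_F_iso F ((DerivedCategory.singleFunctor (ModuleCat.{u} A) i).mapIso e)
        (hC' i)).mono ?_
      simp
    · exact (hC S hS _ h0 i).mono (by simp)

lemma simple_bound : ∃ C : ℤ →₀ ℕ, ∀ (S : ModuleCat.{u} A), IsSimpleModule A S →
      ∀ i, Dle k (HH 0 (F.obj (sg i S))) (C i) := by
  have hA : IsFiniteLength A A := by
    rw [isFiniteLength_iff_isNoetherian_isArtinian]
    exact ⟨isNoetherian_of_tower k inferInstance, isArtinian_of_tower k inferInstance⟩
  obtain ⟨C, hC⟩ := simple_bound_aux (k := k) F hA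
  refine ⟨C, fun S hS i => ?_⟩
  have := IsSimpleModule.nontrivial A S
  obtain ⟨x, hx⟩ := exists_ne (0 : S)
  refine hC S hS (LinearMap.toSpanSingleton A S x) (fun h => hx ?_) i
  simpa using LinearMap.congr_fun h 1

lemma length_bound_aux (C : ℤ → ℕ) (hC : ∀ (S : ModuleCat.{u} A), IsSimpleModule A S →
      ∀ i, Dle k (HH 0 (F.obj (sg i S))) (C i))
    {M : Type u} [AddCommGroup M] [Module A M] (h : IsFiniteLength A M) :
    ∀ d, Dle k (ModuleCat.of A M) d →
      ∀ i, Dle k (HH 0 (F.obj (sg i (ModuleCat.of A M)))) (C i * d) := by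
  induction h with
  | @of_subsingleton M _ _ _ =>
    intro d _ i
    refine dle_F_isZero F (Functor.map_isZero _ ?_) _
    rw [ModuleCat.isZero_iff_subsingleton]
    assumption
  | @of_simple_quotient M _ _ N hN hl ih =>
    intro d hd i
    obtain ⟨d', rfl, hd'⟩ := hd.pred N (IsSimpleModule.nontrivial A (M ⧸ N))
    have := dle_F_quot F (ModuleCat.of A M) N i (ih d' hd' i) (hC (ModuleCat.of A (M ⧸ N)) hN i)
    rwa [mul_add, mul_one]

/-- `H^n` of `X` as `H^0` of a shift. -/
noncomputable def shiftHIso {R : Type u} [Ring R] [HasDerivedCategory.{u} (ModuleCat.{u} R)]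
    (X : DC R) (n a a' : ℤ) (h : n + a = a') : HH a (X⟦n⟧) ≅ HH a' X :=
  ((DerivedCategory.homologyFunctor (ModuleCat.{u} R) 0).shiftIso n a a' h).app X

/-- The main estimate. -/
theorem main_bound : ∃ C : ℤ →₀ ℕ, ∀ (X : DC A) (d : ℤ → ℕ) (p q : ℤ),
    (∀ i, i < p → Subsingleton (HH i X)) → (∀ i, q < i → Subsingleton (HH i X)) →
    (∀ i, Dle k (HH i X) (d i)) → ∀ n,
      Dle k (HH n (F.obj X)) (∑ i ∈ C.support, C i * d (n + i)) := by
  obtain ⟨C, hC⟩ := simple_bound (k := k) F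
  have hC2 : ∀ (M : ModuleCat.{u} A) d, Dle k M d →
      ∀ i, Dle k (HH 0 (F.obj (sg i M))) (C i * d) := fun M d hd =>
    length_bound_aux F C hC (isFiniteLength_of_dle M hd) d hd
  refine ⟨C, fun X d p q hp hq hd n => ?_⟩
  have h1 := dle_F_bounded F C hC2 (fun i => d (n + i)) (q - p + 1).toNat (p - n) (X⟦n⟧)
    (fun i => (hd (n + i)).of_iso (shiftHIso X n i (n + i) rfl).symm)
    (fun i hi => by
      rw [← ModuleCat.isZero_iff_subsingleton]
      refine IsZero.of_iso ?_ (shiftHIso X n i (n + i) rfl)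
      rw [ModuleCat.isZero_iff_subsingleton]
      exact hp _ (by omega))
    (fun i hi => by
      rw [← ModuleCat.isZero_iff_subsingleton]
      refine IsZero.of_iso ?_ (shiftHIso X n i (n + i) rfl)
      rw [ModuleCat.isZero_iff_subsingleton]
      exact hq _ (by omega))
  have e : HH 0 (F.obj (X⟦n⟧)) ≅ HH n (F.obj X) :=
    (DerivedCategory.homologyFunctor (ModuleCat.{u} B) 0).mapIso ((F.commShiftIso n).app X) ≪≫
      shiftHIso (F.obj X) n 0 n (add_zero n)
  refine (h1.of_iso e).mono ?_
  refine Finset.sum_le_sum_of_ne_zero fun i _ hi => ?_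
  rw [Finsupp.mem_support_iff]
  exact left_ne_zero_of_mul hi

end Bounds2

section Final
set_option linter.unusedSectionVars false

variable {k : Type u} [Field k]

lemma isZero_Hobj_iff {R : Type u} [Ring R] [HasDerivedCategory.{u} (ModuleCat.{u} R)]
    (i : ℤ) (X : DC R) : IsZero (Hobj R i X) ↔ Subsingleton (HH i X) :=
  ModuleCat.isZero_iff_subsingleton

section One

variable {A : Type u} [Ring A] [Algebra k A] [HasDerivedCategory.{u} (ModuleCat.{u} A)]

lemma dle_hdim {X : DC A} (hX : InDb k A X) (i : ℤ) : Dle k (HH i X) (hdim k A i X) :=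
  dle_finrank (hX.2 i)

lemma hdim_le_hl {X : DC A} (hX : InDb k A X) (i : ℤ) : hdim k A i X ≤ hl k A X := by
  refine le_csSup ?_ ⟨i, rfl⟩
  obtain ⟨a, b, hab⟩ := hX.1
  refine ⟨∑ j ∈ Finset.Icc a b, hdim k A j X, ?_⟩
  rintro _ ⟨j, rfl⟩
  by_cases hj : j < a ∨ b < j
  · have h1 := (isZero_Hobj_iff j X).1 (hab j hj)
    have h2 : hdim k A j X ≤ 0 := (dle_of_subsingleton h1 0).finrank_le
    exact h2.trans (Nat.zero_le _)
  · exact Finset.single_le_sum (f := fun j => hdim k A j X) (fun _ _ => Nat.zero_le _)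
      (Finset.mem_Icc.2 (by omega))

lemma le_hw {X : DC A} (hX : InDb k A X) {i j : ℤ} (hi : ¬ IsZero (Hobj A i X))
    (hj : ¬ IsZero (Hobj A j X)) (n : ℕ) (hn : (n : ℤ) = j - i + 1) : n ≤ hw A X := by
  refine le_csSup ?_ ⟨i, j, hi, hj, hn⟩
  obtain ⟨a, b, hab⟩ := hX.1
  refine ⟨(b - a + 1).toNat, ?_⟩
  rintro m ⟨i', j', hi', hj', hm⟩
  have h1 : ¬ (i' < a ∨ b < i') := fun h => hi' (hab _ h)
  have h2 : ¬ (j' < a ∨ b < j') := fun h => hj' (hab _ h)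
  omega

lemma pos_of_indec {X : DC A} (h : Indec X) (hX : InDb k A X) :
    1 ≤ hw A X ∧ 1 ≤ hl k A X := by
  obtain ⟨i, hi⟩ : ∃ i, ¬ Subsingleton (HH i X) := by
    by_contra! hc
    exact h.1 (hm_isZero hc)
  have hi' : ¬ IsZero (Hobj A i X) := by rwa [isZero_Hobj_iff]
  refine ⟨le_hw hX hi' hi' 1 (by simp), le_trans ?_ (hdim_le_hl hX i)⟩
  by_contra hc
  refine hi (Dle.subsingleton ((dle_hdim hX i).mono (?_ : _ ≤ 0)))
  omega

end One

variable {A : Type u} [Ring A] [Algebra k A] [FiniteDimensional k A]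
  [HasDerivedCategory.{u} (ModuleCat.{u} A)]
  {B : Type u} [Ring B] [Algebra k B] [FiniteDimensional k B]
  [HasDerivedCategory.{u} (ModuleCat.{u} B)]

lemma consequences (F : DC A ⥤ DC B) [F.CommShift ℤ] [F.IsTriangulated] [F.IsEquivalence] :
    ∃ c K : ℕ, ∀ (X : DC A) (Y : DC B), Nonempty (F.obj X ≅ Y) → InDb k A X →
      InDb k B Y ∧ hw B Y ≤ hw A X + c ∧ hl k B Y ≤ K * hl k A X := by
  obtain ⟨C, hC⟩ := main_bound (k := k) F
  let c : ℕ := ∑ i ∈ C.support, i.natAbs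
  have hc : ∀ i ∈ C.support, i.natAbs ≤ c := fun i hi =>
    Finset.single_le_sum (f := fun i : ℤ => i.natAbs) (fun _ _ => Nat.zero_le _) hi
  refine ⟨2 * c, ∑ i ∈ C.support, C i, ?_⟩
  rintro X Y ⟨e⟩ hX
  obtain ⟨p, q, hpq⟩ := hX.1
  have h1 : ∀ n, Dle k (HH n Y) (∑ i ∈ C.support, C i * hdim k A (n + i) X) := fun n =>
    (hC X (fun i => hdim k A i X) p q
      (fun i hi => (isZero_Hobj_iff i X).1 (hpq i (Or.inl hi)))
      (fun i hi => (isZero_Hobj_iff i X).1 (hpq i (Or.inr hi))) (dle_hdim hX) n).of_iso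
      ((DerivedCategory.homologyFunctor (ModuleCat.{u} B) n).mapIso e)
  have h2 : ∀ n, ¬ IsZero (Hobj B n Y) → ∃ i ∈ C.support, ¬ IsZero (Hobj A (n + i) X) := by
    intro n hn
    by_contra! hcon
    refine hn ?_
    rw [isZero_Hobj_iff]
    refine Dle.subsingleton ((h1 n).mono (le_of_eq ?_))
    refine Finset.sum_eq_zero fun i hi => ?_
    have h3 := (isZero_Hobj_iff _ X).1 (hcon i hi)
    have h4 : hdim k A (n + i) X ≤ 0 := (dle_of_subsingleton h3 0).finrank_le
    rw [Nat.le_zero.1 h4, mul_zero]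
  refine ⟨⟨⟨p - c, q + c, fun n hn => ?_⟩, fun n => (h1 n).finite⟩, ?_, ?_⟩
  · by_contra hcon
    obtain ⟨i, hi, hi'⟩ := h2 n hcon
    have h3 : ¬ (n + i < p ∨ q < n + i) := fun h => hi' (hpq _ h)
    have := hc i hi
    omega
  · refine csSup_le' ?_
    rintro n ⟨i, j, hi, hj, hn⟩
    obtain ⟨i', hi1, hi2⟩ := h2 i hi
    obtain ⟨j', hj1, hj2⟩ := h2 j hj
    have := hc i' hi1
    have := hc j' hj1
    by_cases hneg : (j + j') - (i + i') + 1 < 0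
    · omega
    · have := le_hw hX hi2 hj2 ((j + j') - (i + i') + 1).toNat (by omega)
      omega
  · refine csSup_le' ?_
    rintro _ ⟨n, rfl⟩
    refine (h1 n).finrank_le.trans ?_
    rw [Finset.sum_mul]
    exact Finset.sum_le_sum fun i _ => Nat.mul_le_mul_left _ (hdim_le_hl hX _)


lemma indec_map (F : DC A ⥤ DC B) [F.PreservesZeroMorphisms] [F.IsEquivalence] {X : DC A}
    (h : Indec X) : Indec (F.obj X) := by
  refine ⟨fun h0 => h.1 ?_, fun e he => ?_⟩
  · rw [IsZero.iff_id_eq_zero] at h0 ⊢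
    apply F.map_injective
    rw [F.map_id, h0, F.map_zero]
  · rcases h.2 (F.preimage e) (F.map_injective (by simpa using he)) with h1 | h1
    · left
      rw [← F.map_preimage e, h1, F.map_zero]
    · right
      rw [← F.map_preimage e, h1, F.map_id]

lemma one_direction (F : DC A ⥤ DC B) [F.CommShift ℤ] [F.IsTriangulated] [F.IsEquivalence]
    (G : DC B ⥤ DC A) [G.CommShift ℤ] [G.IsTriangulated] [G.IsEquivalence]
    (e : ∀ X, Nonempty (G.obj (F.obj X) ≅ X)) :
    (glhr k B < ⊤ → glhr k A < ⊤) ∧ (glhl k B < ⊤ → glhl k A < ⊤) ∧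
    (glhw k B < ⊤ → glhw k A < ⊤) := by
  obtain ⟨c₁, K₁, hF⟩ := consequences (k := k) F
  obtain ⟨c, K, hG⟩ := consequences (k := k) G
  have key : ∀ X : DC A, Indec X ∧ InDb k A X → (Indec (F.obj X) ∧ InDb k B (F.obj X)) ∧
      hw A X ≤ hw B (F.obj X) + c ∧ hl k A X ≤ K * hl k B (F.obj X) := by
    rintro X ⟨h1, h2⟩
    have h3 := (hF X _ ⟨Iso.refl _⟩ h2).1
    exact ⟨⟨indec_map F h1, h3⟩, (hG _ X (e X) h3).2⟩
  unfold glhr glhl glhw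
  simp only [ENat.iSup_natCast_lt_top]
  refine ⟨?_, ?_, ?_⟩
  · rintro ⟨N, hN⟩
    refine ⟨(1 + c) * K * N, ?_⟩
    rintro _ ⟨⟨X, hX⟩, rfl⟩
    obtain ⟨h1, h2, h3⟩ := key X hX
    have h4 : hr k B (F.obj X) ≤ N := hN ⟨⟨F.obj X, h1⟩, rfl⟩
    have h5 := (pos_of_indec h1.1 h1.2).1
    calc hr k A X = hw A X * hl k A X := rfl
      _ ≤ (hw B (F.obj X) + c) * (K * hl k B (F.obj X)) := Nat.mul_le_mul h2 h3
      _ ≤ ((1 + c) * hw B (F.obj X)) * (K * hl k B (F.obj X)) := by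
        refine Nat.mul_le_mul_right _ ?_
        nlinarith
      _ = (1 + c) * K * hr k B (F.obj X) := by rw [hr]; ring
      _ ≤ (1 + c) * K * N := Nat.mul_le_mul_left _ h4
  · rintro ⟨N, hN⟩
    refine ⟨K * N, ?_⟩
    rintro _ ⟨⟨X, hX⟩, rfl⟩
    obtain ⟨h1, h2, h3⟩ := key X hX
    have h4 : hl k B (F.obj X) ≤ N := hN ⟨⟨F.obj X, h1⟩, rfl⟩
    exact h3.trans (Nat.mul_le_mul_left _ h4)
  · rintro ⟨N, hN⟩
    refine ⟨N + c, ?_⟩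
    rintro _ ⟨⟨X, hX⟩, rfl⟩
    obtain ⟨h1, h2, h3⟩ := key X hX
    have h4 : hw B (F.obj X) ≤ N := hN ⟨⟨F.obj X, h1⟩, rfl⟩
    exact h2.trans (Nat.add_le_add_right h4 _)

end Final

section Both
set_option linter.unusedSectionVars false

lemma both_directions {k : Type u} [Field k]
    {A : Type u} [Ring A] [Algebra k A] [FiniteDimensional k A]
    [HasDerivedCategory.{u} (ModuleCat.{u} A)]
    {B : Type u} [Ring B] [Algebra k B] [FiniteDimensional k B]
    [HasDerivedCategory.{u} (ModuleCat.{u} B)]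
    (E : DC A ≌ DC B) [E.functor.CommShift ℤ] [E.functor.IsTriangulated] :
    (glhr k A < ⊤ ↔ glhr k B < ⊤) ∧
    (glhl k A < ⊤ ↔ glhl k B < ⊤) ∧
    (glhw k A < ⊤ ↔ glhw k B < ⊤) := by
  letI : E.inverse.CommShift ℤ := E.commShiftInverse ℤ
  haveI : E.CommShift ℤ := E.commShift_of_functor ℤ
  haveI : E.inverse.IsTriangulated := E.toAdjunction.isTriangulated_rightAdjoint
  have h1 := one_direction (k := k) E.functor E.inverse fun X => ⟨(E.unitIso.app X).symm⟩
  have h2 := one_direction (k := k) E.inverse E.functor fun X => ⟨E.counitIso.app X⟩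
  exact ⟨⟨h2.1, h1.1⟩, ⟨h2.2.1, h1.2.1⟩, ⟨h2.2.2, h1.2.2⟩⟩

end Both

theorem glhr_glhl_glhw_finite_iff_of_derived_equivalence
    (A : Type u) [Ring A] [Algebra k A] [FiniteDimensional k A]
    [HasDerivedCategory.{u} (ModuleCat.{u} A)]
    (B : Type u) [Ring B] [Algebra k B] [FiniteDimensional k B]
    [HasDerivedCategory.{u} (ModuleCat.{u} B)]
    (F : DerivedCategory (ModuleCat.{u} A) ⥤ DerivedCategory (ModuleCat.{u} B))
    [F.CommShift ℤ] [F.IsTriangulated] [F.IsEquivalence] :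
    (glhr k A < ⊤ ↔ glhr k B < ⊤) ∧
    (glhl k A < ⊤ ↔ glhl k B < ⊤) ∧
    (glhw k A < ⊤ ↔ glhw k B < ⊤) := by
  rename_i i1 i2 i3
  exact @both_directions k _ A _ _ _ _ B _ _ _ _ F.asEquivalence i1 i2
end
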